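/- arXiv:math/0701389 — 15 statements merged into one kernel-verified Lean document; each statement's English description precedes it below -/
import Mathlib

section
/- Let 𝔤 be a finite-dimensional real Lie algebra with an ad-invariant inner product Q, let 𝔨 ⊆ 𝔤 be an abelian Lie subalgebra (⁅𝔨,𝔨⁆ = 0) with Q-orthogonal complement 𝔪, and for t > 0 let P_t be the linear automorphism of 𝔤 equal to t·id on 𝔨 and id on 𝔪. If 0 < t ≤ 4/3, then for all X, Y ∈ 𝔤 the unnormalized sectional curvature κ_{P_t}(X,Y) given by Püttmann's formula is non-negative; i.e. the left-invariant metric Q_t = tQ|_𝔨 + Q|_{𝔨^⊥} has non-negative sectional curvature as long as t ≤ 4/3. -/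
/-- The bilinear expression `B(X,Y) = (1/2)(⁅X,PY⁆ − ⁅PX,Y⁆)` from Püttmann's
curvature formula. -/
noncomputable def puttmannB {L : Type*} [LieRing L] [LieAlgebra ℝ L]
    (P : L →ₗ[ℝ] L) (X Y : L) : L :=
  (1 / 2 : ℝ) • (⁅X, P Y⁆ - ⁅P X, Y⁆)

/-- Püttmann's formula for the unnormalized sectional curvature of the
left-invariant metric `⟨X,Y⟩ = Q(PX,Y)`:
`κ_P(X,Y) = (1/2)Q(⁅PX,Y⁆+⁅X,PY⁆,⁅X,Y⁆) − (3/4)Q(P⁅X,Y⁆,⁅X,Y⁆)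
  + Q(B(X,Y),P⁻¹B(X,Y)) − Q(B(X,X),P⁻¹B(Y,Y))`. -/
noncomputable def puttmannKappa {L : Type*} [LieRing L] [LieAlgebra ℝ L]
    (Q : L →ₗ[ℝ] L →ₗ[ℝ] ℝ) (P Pinv : L →ₗ[ℝ] L) (X Y : L) : ℝ :=
  (1 / 2) * Q (⁅P X, Y⁆ + ⁅X, P Y⁆) ⁅X, Y⁆
    - (3 / 4) * Q (P ⁅X, Y⁆) ⁅X, Y⁆
    + Q (puttmannB P X Y) (Pinv (puttmannB P X Y))
    - Q (puttmannB P X X) (Pinv (puttmannB P Y Y))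

/-- **Grove–Ziller / Ziller, Lemma 2.5.** Let `𝔤` be a finite-dimensional real Lie
algebra with an ad-invariant inner product `Q`, `𝔨 ⊆ 𝔤` an abelian subalgebra with
`Q`-orthogonal complement `𝔪`, and `P_t = t·id` on `𝔨`, `id` on `𝔪`.  If
`0 < t ≤ 4/3` then the left-invariant metric `Q_t = tQ|𝔨 + Q|𝔨^⊥` has
non-negative sectional curvature: `κ_{P_t}(X,Y) ≥ 0` for all `X, Y`. -/
theorem leftInvariant_nonneg_curv_abelian_scaling
    {L : Type*} [LieRing L] [LieAlgebra ℝ L] [FiniteDimensional ℝ L]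
    (Q : L →ₗ[ℝ] L →ₗ[ℝ] ℝ)
    (hQsymm : ∀ X Y : L, Q X Y = Q Y X)
    (hQpos : ∀ X : L, X ≠ 0 → 0 < Q X X)
    (hQad : ∀ X Y Z : L, Q ⁅Z, X⁆ Y + Q X ⁅Z, Y⁆ = 0)
    (k m : Submodule ℝ L)
    (hkab : ∀ X ∈ k, ∀ Y ∈ k, ⁅X, Y⁆ = (0 : L))
    (hm : ∀ Y : L, Y ∈ m ↔ ∀ X ∈ k, Q X Y = 0)
    (t : ℝ) (ht0 : 0 < t) (ht : t ≤ 4 / 3)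
    (Pt PtInv : L →ₗ[ℝ] L)
    (hPtk : ∀ X ∈ k, Pt X = t • X)
    (hPtm : ∀ X ∈ m, Pt X = X)
    (hinv : PtInv.comp Pt = LinearMap.id) :
    ∀ X Y : L, 0 ≤ puttmannKappa Q Pt PtInv X Y := by
  have hdec : ∀ X : L, ∃ a ∈ k, ∃ x ∈ m, X = a + x := by
    intro X
    have hrefl : LinearMap.BilinForm.IsRefl Q := fun x y h => by rw [hQsymm]; exact h
    have hc := (LinearMap.BilinForm.isCompl_orthogonal_iff_disjoint (W := k) hrefl).2 (by
      rw [Submodule.disjoint_def]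
      intro x hx hx'
      by_contra hne
      have h1 := hQpos x hne
      have h2 : Q x x = 0 := hx' x hx
      linarith)
    have hX : X ∈ k ⊔ LinearMap.BilinForm.orthogonal Q k := by
      rw [hc.sup_eq_top]; trivial
    obtain ⟨a, ha, x, hx, h⟩ := Submodule.mem_sup.1 hX
    exact ⟨a, ha, x, (hm x).2 (fun c hc => hx c hc), h.symm⟩
  have hnn : ∀ X : L, 0 ≤ Q X X := by
    intro X
    by_cases h : X = 0
    · simp [h]
    · exact (hQpos X h).le
  have hkm : ∀ a ∈ k, ∀ x ∈ m, ⁅a, x⁆ ∈ m := by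
    intro a ha x hx
    rw [hm]
    intro c hc
    have h := hQad c x a
    rw [hkab a ha c hc] at h
    simpa using h
  have hinvm : ∀ x ∈ m, PtInv x = x := by
    intro x hx
    have h := LinearMap.congr_fun hinv x
    simpa [hPtm x hx] using h
  intro X Y
  obtain ⟨a, ha, x, hx, rfl⟩ := hdec X
  obtain ⟨b, hb, y, hy, rfl⟩ := hdec Y
  obtain ⟨wk, hwk, wm, hwm, hw⟩ := hdec ⁅x, y⁆
  have hu := hkm a ha y hy
  have hv := hkm b hb x hx
  have hax := hkm a ha x hx
  have hby := hkm b hb y hy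
  have hPX : Pt (a + x) = t • a + x := by rw [map_add, hPtk a ha, hPtm x hx]
  have hPY : Pt (b + y) = t • b + y := by rw [map_add, hPtk b hb, hPtm y hy]
  have hba : ⁅x, a⁆ = -⁅a, x⁆ := (lie_skew x a).symm
  have hxb : ⁅x, b⁆ = -⁅b, x⁆ := (lie_skew x b).symm
  have hyb : ⁅y, b⁆ = -⁅b, y⁆ := (lie_skew y b).symm
  have hkey : Q ⁅a, x⁆ ⁅b, y⁆ = Q ⁅b, x⁆ ⁅a, y⁆ := by
    have h1 := hQad x ⁅b, y⁆ a
    have h2 := hQad x ⁅a, y⁆ b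
    have h3 : ⁅a, ⁅b, y⁆⁆ = ⁅b, ⁅a, y⁆⁆ := by
      rw [leibniz_lie, hkab a ha b hb]; simp
    rw [h3] at h1
    linarith
  have hXY : ⁅a + x, b + y⁆ = wk + (⁅a, y⁆ - ⁅b, x⁆ + wm) := by
    rw [add_lie, lie_add, lie_add, hkab a ha b hb, hxb, hw]; abel
  have hPXY : ⁅t • a + x, b + y⁆ = wk + (t • ⁅a, y⁆ - ⁅b, x⁆ + wm) := by
    rw [add_lie, lie_add, lie_add, smul_lie, smul_lie, hkab a ha b hb, hxb, hw, smul_zero]; abel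
  have hXPY : ⁅a + x, t • b + y⁆ = wk + (⁅a, y⁆ - t • ⁅b, x⁆ + wm) := by
    rw [add_lie, lie_add, lie_add, lie_smul, lie_smul, hkab a ha b hb, hxb, hw, smul_zero,
      smul_neg]; abel
  have hPZ : Pt (wk + (⁅a, y⁆ - ⁅b, x⁆ + wm)) = t • wk + (⁅a, y⁆ - ⁅b, x⁆ + wm) := by
    rw [map_add, hPtk wk hwk, hPtm _ (m.add_mem (m.sub_mem hu hv) hwm)]
  have hB : puttmannB Pt (a + x) (b + y) = ((1 - t) / 2) • (⁅a, y⁆ + ⁅b, x⁆) := by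
    rw [puttmannB, hPX, hPY, hPXY, hXPY]; module
  have hBd : ∀ c ∈ k, ∀ z ∈ m, puttmannB Pt (c + z) (c + z) = (1 - t) • ⁅c, z⁆ := by
    intro c hc z hz
    have h1 : Pt (c + z) = t • c + z := by rw [map_add, hPtk c hc, hPtm z hz]
    have h2 : ⁅z, c⁆ = -⁅c, z⁆ := (lie_skew z c).symm
    rw [puttmannB, h1]
    simp only [add_lie, lie_add, smul_lie, lie_smul, lie_self, h2]
    module
  unfold puttmannKappa
  rw [hB, hBd a ha x hx, hBd b hb y hy, hPX, hPY, hPXY, hXPY, hXY, hPZ,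
    hinvm _ (m.smul_mem _ (m.add_mem hu hv)), hinvm _ (m.smul_mem _ hby)]
  have o1 : Q wk ⁅a, y⁆ = 0 := (hm _).1 hu wk hwk
  have o2 : Q wk ⁅b, x⁆ = 0 := (hm _).1 hv wk hwk
  have o3 : Q wk wm = 0 := (hm _).1 hwm wk hwk
  have n1 := hnn (t • (⁅a, y⁆ - ⁅b, x⁆) + wm)
  have n2 : 0 ≤ (1 - 3 * t / 4) * Q wk wk := mul_nonneg (by linarith) (hnn wk)
  have s1 := hQsymm ⁅a, y⁆ wk
  have s2 := hQsymm ⁅b, x⁆ wk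
  have s3 := hQsymm wm wk
  have s4 := hQsymm ⁅b, x⁆ ⁅a, y⁆
  have s5 := hQsymm wm ⁅a, y⁆
  have s6 := hQsymm wm ⁅b, x⁆
  simp only [map_add, map_sub, map_smul, LinearMap.add_apply, LinearMap.sub_apply,
    LinearMap.smul_apply, smul_eq_mul, s1, s2, s3, s5, s6, o1, o2, o3, hkey, s4] at n1 ⊢
  linarith
end

section
/- Let 𝔤 be a finite-dimensional real Lie algebra with an ad-invariant inner product Q, let 𝔨 ⊆ 𝔤 be any Lie subalgebra with Q-orthogonal complement 𝔪, and for t > 0 let P_t be the linear automorphism of 𝔤 equal to t·id on 𝔨 and id on 𝔪. If 0 < t ≤ 1, then for all X, Y ∈ 𝔤 the unnormalized sectional curvature κ_{P_t}(X,Y) given by Püttmann's formula is non-negative; i.e. the left-invariant metric Q_t = tQ|_𝔨 + Q|_𝔪 has non-negative sectional curvature for t ≤ 1. -/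
theorem exists_decomp_aux {L : Type*} [AddCommGroup L] [Module ℝ L] [FiniteDimensional ℝ L]
    (Q : L →ₗ[ℝ] L →ₗ[ℝ] ℝ)
    (hQsymm : ∀ X Y : L, Q X Y = Q Y X)
    (hQpos : ∀ X : L, X ≠ 0 → 0 < Q X X)
    (k : Submodule ℝ L) (X : L) : ∃ A ∈ k, ∃ M, (∀ Z ∈ k, Q Z M = 0) ∧ X = A + M := by
  have hc : IsCompl k (LinearMap.BilinForm.orthogonal Q k) := by
    apply (LinearMap.BilinForm.isCompl_orthogonal_iff_disjoint (B := Q) ?_).2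
    · rw [Submodule.disjoint_def]
      intro x hx hx'
      by_contra h
      have := hQpos x h
      rw [LinearMap.BilinForm.mem_orthogonal_iff] at hx'
      have h2 : Q x x = 0 := hx' x hx
      linarith
    · intro x y h
      rw [hQsymm]; exact h
  have : X ∈ k ⊔ (LinearMap.BilinForm.orthogonal Q k) := by rw [hc.sup_eq_top]; trivial
  obtain ⟨A, hA, M, hM, h⟩ := Submodule.mem_sup.1 this
  exact ⟨A, hA, M, fun Z hZ => hM Z hZ, h.symm⟩

/-- **Eschenburg / Cheeger deformation (Lemma 4.2, first part).**  Let `𝔤` be a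
finite-dimensional real Lie algebra with an ad-invariant inner product `Q`,
`𝔨 ⊆ 𝔤` any Lie subalgebra with `Q`-orthogonal complement `𝔪`, and `P_t = t·id`
on `𝔨`, `id` on `𝔪`.  If `0 < t ≤ 1` then the left-invariant metric
`Q_t = tQ|𝔨 + Q|𝔪` has non-negative sectional curvature. -/
theorem leftInvariant_nonneg_curv_subalgebra_scaling
    {L : Type*} [LieRing L] [LieAlgebra ℝ L] [FiniteDimensional ℝ L]
    (Q : L →ₗ[ℝ] L →ₗ[ℝ] ℝ)
    (hQsymm : ∀ X Y : L, Q X Y = Q Y X)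
    (hQpos : ∀ X : L, X ≠ 0 → 0 < Q X X)
    (hQad : ∀ X Y Z : L, Q ⁅Z, X⁆ Y + Q X ⁅Z, Y⁆ = 0)
    (k : LieSubalgebra ℝ L) (m : Submodule ℝ L)
    (hm : ∀ Y : L, Y ∈ m ↔ ∀ X ∈ k, Q X Y = 0)
    (t : ℝ) (ht0 : 0 < t) (ht : t ≤ 1)
    (Pt PtInv : L →ₗ[ℝ] L)
    (hPtk : ∀ X ∈ k, Pt X = t • X)
    (hPtm : ∀ X ∈ m, Pt X = X)
    (hinv : PtInv.comp Pt = LinearMap.id) :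
    ∀ X Y : L, 0 ≤ puttmannKappa Q Pt PtInv X Y := by
  intro X Y
  have hnn : ∀ Z : L, 0 ≤ Q Z Z := by
    intro Z
    by_cases h : Z = 0
    · simp [h]
    · exact (hQpos Z h).le
  have hdec : ∀ Z : L, ∃ A ∈ k, ∃ M ∈ m, Z = A + M := by
    intro Z
    obtain ⟨A, hA, M, hM, h⟩ := exists_decomp_aux Q hQsymm hQpos k.toSubmodule Z
    exact ⟨A, hA, M, (hm M).2 hM, h⟩
  have hinvm : ∀ Z ∈ m, PtInv Z = Z := by
    intro Z hZ
    have := LinearMap.congr_fun hinv Z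
    simpa [hPtm Z hZ] using this
  have hkm : ∀ A ∈ k, ∀ M ∈ m, ⁅A, M⁆ ∈ m := by
    intro A hA M hM
    rw [hm]
    intro Z hZ
    have h1 := hQad Z M A
    have h2 := (hm M).1 hM ⁅A, Z⁆ (k.lie_mem hA hZ)
    linarith
  obtain ⟨A, hA, M, hM, rfl⟩ := hdec X
  obtain ⟨C, hC, N, hN, rfl⟩ := hdec Y
  obtain ⟨h, hh, v, hv, hMN⟩ := hdec ⁅M, N⁆
  obtain ⟨a, ha⟩ : ∃ a, a = ⁅A, C⁆ := ⟨_, rfl⟩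
  obtain ⟨b, hb⟩ : ∃ b, b = ⁅A, N⁆ := ⟨_, rfl⟩
  obtain ⟨c, hc⟩ : ∃ c, c = ⁅C, M⁆ := ⟨_, rfl⟩
  obtain ⟨d, hd⟩ : ∃ d, d = ⁅A, M⁆ := ⟨_, rfl⟩
  obtain ⟨e, he⟩ : ∃ e, e = ⁅C, N⁆ := ⟨_, rfl⟩
  have hak : a ∈ k := ha ▸ k.lie_mem hA hC
  have hbm : b ∈ m := hb ▸ hkm A hA N hN
  have hcm : c ∈ m := hc ▸ hkm C hC M hM
  have hdm : d ∈ m := hd ▸ hkm A hA M hM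
  have hem : e ∈ m := he ▸ hkm C hC N hN
  have hMC : ⁅M, C⁆ = -c := by rw [hc, lie_skew]
  have hMA : ⁅M, A⁆ = -d := by rw [hd, lie_skew]
  have hNC : ⁅N, C⁆ = -e := by rw [he, lie_skew]
  -- Jacobi identity
  have key : Q d e = Q a h + Q b c := by
    have h1 := hQad M e A
    have h2 := hQad M b C
    have h3 := hQad M a N
    have h4 : ⁅A, e⁆ = ⁅a, N⁆ + ⁅C, b⁆ := by
      rw [ha, hb, he]; exact leibniz_lie A C N
    rw [← hd, h4, map_add, ← lie_skew a N, map_neg] at h1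
    rw [← hc, hQsymm c b] at h2
    rw [← lie_skew N M, hMN, map_neg, LinearMap.neg_apply, map_add, LinearMap.add_apply,
      hQsymm h a, hQsymm v a, (hm v).1 hv a hak] at h3
    linarith
  have hXY : ⁅A + M, C + N⁆ = (a + h) + (b - c + v) := by
    simp only [lie_add, add_lie, hMN, hMC, ← ha, ← hb]; abel
  have e1 : Pt (A + M) = t • A + M := by rw [map_add, hPtk A hA, hPtm M hM]
  have e2 : Pt (C + N) = t • C + N := by rw [map_add, hPtk C hC, hPtm N hN]
  have e3 : Pt ((a + h) + (b - c + v)) = t • (a + h) + (b - c + v) := by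
    rw [map_add, hPtk _ (k.add_mem hak hh), hPtm _ (m.add_mem (m.sub_mem hbm hcm) hv)]
  have s1 : ⁅t • A + M, C + N⁆ = t • a + h + (t • b - c + v) := by
    simp only [lie_add, add_lie, smul_lie, lie_smul, hMN, hMC, ← ha, ← hb]; abel
  have s2 : ⁅A + M, t • C + N⁆ = t • a + h + (b - t • c + v) := by
    simp only [lie_add, add_lie, smul_lie, lie_smul, hMN, hMC, ← ha, ← hb]; module
  have B1 : puttmannB Pt (A + M) (C + N) = ((1 - t) / 2) • (b + c) := by
    rw [puttmannB, e1, e2, s1, s2]; module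
  have B2 : puttmannB Pt (A + M) (A + M) = (1 - t) • d := by
    rw [puttmannB, e1]
    simp only [lie_add, add_lie, smul_lie, lie_smul, lie_self, hMA, ← hd]; module
  have B3 : puttmannB Pt (C + N) (C + N) = (1 - t) • e := by
    rw [puttmannB, e2]
    simp only [lie_add, add_lie, smul_lie, lie_smul, lie_self, hNC, ← he]; module
  have i1 := hinvm _ (m.smul_mem ((1 - t) / 2) (m.add_mem hbm hcm))
  have i2 := hinvm _ (m.smul_mem (1 - t) hem)
  rw [puttmannKappa, B1, B2, B3, i1, i2, e1, e2, s1, s2, hXY, e3]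
  have o : ∀ x ∈ k, ∀ y ∈ m, Q x y = 0 ∧ Q y x = 0 := fun x hx y hy =>
    ⟨(hm y).1 hy x hx, by rw [hQsymm]; exact (hm y).1 hy x hx⟩
  have p1 := hnn (a + (3 - 2 * t) • h)
  have p2 := hnn h
  have p3 := hnn (t • (b - c) + v)
  have q1 : 0 ≤ t / 4 * Q (a + (3 - 2 * t) • h) (a + (3 - 2 * t) • h) := by positivity
  have q2 : 0 ≤ (1 - t) ^ 3 * Q h h := mul_nonneg (pow_nonneg (by linarith) 3) p2
  simp only [map_add, map_sub, map_smul, LinearMap.add_apply, LinearMap.sub_apply,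
    LinearMap.smul_apply, smul_eq_mul,
    (o a hak b hbm).1, (o a hak b hbm).2, (o a hak c hcm).1, (o a hak c hcm).2,
    (o a hak v hv).1, (o a hak v hv).2,
    (o h hh b hbm).1, (o h hh b hbm).2, (o h hh c hcm).1, (o h hh c hcm).2,
    (o h hh v hv).1, (o h hh v hv).2, key,
    hQsymm h a, hQsymm c b, hQsymm v b, hQsymm v c] at *
  linarith
end

section
/- Let 𝔤 be a finite-dimensional real Lie algebra with an ad-invariant inner product Q, let 𝔨 ⊆ 𝔤 be a Lie subalgebra whose Q-orthogonal complement 𝔪 satisfies ⁅𝔪,𝔪⁆ ⊆ 𝔨 (the symmetric-pair condition), and for 0 < t < 1 let P_t be the linear automorphism of 𝔤 equal to t·id on 𝔨 and id on 𝔪. Then for X, Y ∈ 𝔤 the unnormalized sectional curvature κ_{P_t}(X,Y) given by Püttmann's formula vanishes if and only if ⁅X,Y⁆ = 0, ⁅X_𝔨,Y_𝔨⁆ = 0 and ⁅X_𝔪,Y_𝔪⁆ = 0, where X_𝔨, X_𝔪 denote the Q-orthogonal projections of X onto 𝔨 and 𝔪. -/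
/-- **Eschenburg (Lemma 4.2, second part).**  Let `𝔤` be a finite-dimensional real
Lie algebra with an ad-invariant inner product `Q`, `𝔨 ⊆ 𝔤` a subalgebra whose
`Q`-orthogonal complement `𝔪` satisfies `⁅𝔪,𝔪⁆ ⊆ 𝔨` (the symmetric-pair
condition), and for `0 < t < 1` let `P_t = t·id` on `𝔨`, `id` on `𝔪`.  Then
`κ_{P_t}(X,Y) = 0` if and only if `⁅X,Y⁆ = ⁅X_𝔨,Y_𝔨⁆ = ⁅X_𝔪,Y_𝔪⁆ = 0`, where
`X = X_𝔨 + X_𝔪` is the `Q`-orthogonal decomposition. -/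
theorem zero_curvature_plane_characterization_symmetric_pair
    {L : Type*} [LieRing L] [LieAlgebra ℝ L] [FiniteDimensional ℝ L]
    (Q : L →ₗ[ℝ] L →ₗ[ℝ] ℝ)
    (hQsymm : ∀ X Y : L, Q X Y = Q Y X)
    (hQpos : ∀ X : L, X ≠ 0 → 0 < Q X X)
    (hQad : ∀ X Y Z : L, Q ⁅Z, X⁆ Y + Q X ⁅Z, Y⁆ = 0)
    (k : LieSubalgebra ℝ L) (m : Submodule ℝ L)
    (hm : ∀ Y : L, Y ∈ m ↔ ∀ X ∈ k, Q X Y = 0)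
    (hsym : ∀ X ∈ m, ∀ Y ∈ m, ⁅X, Y⁆ ∈ k)
    (t : ℝ) (ht0 : 0 < t) (ht : t < 1)
    (Pt PtInv : L →ₗ[ℝ] L)
    (hPtk : ∀ X ∈ k, Pt X = t • X)
    (hPtm : ∀ X ∈ m, Pt X = X)
    (hinv : PtInv.comp Pt = LinearMap.id)
    (X Y Xk Xm Yk Ym : L)
    (hXk : Xk ∈ k) (hXm : Xm ∈ m) (hXdec : X = Xk + Xm)
    (hYk : Yk ∈ k) (hYm : Ym ∈ m) (hYdec : Y = Yk + Ym) :
    puttmannKappa Q Pt PtInv X Y = 0 ↔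
      (⁅X, Y⁆ = (0 : L) ∧ ⁅Xk, Yk⁆ = (0 : L) ∧ ⁅Xm, Ym⁆ = (0 : L)) := by
  have hkm : ∀ U ∈ k, ∀ V ∈ m, ⁅U, V⁆ ∈ m := by
    intro U hU V hV
    rw [hm]
    intro W hW
    have h1 := hQad W V U
    have h2 := (hm V).1 hV ⁅U, W⁆ (k.lie_mem hU hW)
    linarith
  have hPm : ∀ V ∈ m, PtInv V = V := by
    intro V hV
    have h := LinearMap.congr_fun hinv V
    simpa [hPtm V hV] using h
  have hpos : ∀ V : L, 0 ≤ Q V V := by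
    intro V
    by_cases h : V = 0
    · simp [h]
    · exact (hQpos V h).le
  have hzero : ∀ V : L, Q V V = 0 → V = 0 := by
    intro V h
    by_contra hne
    exact absurd h (hQpos V hne).ne'
  have ha : ⁅Xk, Yk⁆ ∈ k := k.lie_mem hXk hYk
  have hb : ⁅Xm, Ym⁆ ∈ k := hsym _ hXm _ hYm
  have hc : ⁅Xk, Ym⁆ ∈ m := hkm _ hXk _ hYm
  have hd : ⁅Xm, Yk⁆ ∈ m := by
    rw [← lie_skew]
    exact m.neg_mem (hkm _ hYk _ hXm)
  have hx : ⁅Xk, Xm⁆ ∈ m := hkm _ hXk _ hXm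
  have hy : ⁅Yk, Ym⁆ ∈ m := hkm _ hYk _ hYm
  have hkey : Q ⁅Xk, Xm⁆ ⁅Yk, Ym⁆ = Q ⁅Xk, Yk⁆ ⁅Xm, Ym⁆ - Q ⁅Xk, Ym⁆ ⁅Xm, Yk⁆ := by
    have e1 := hQad Xk ⁅Yk, Ym⁆ Xm
    have e2 := hQad Xk ⁅Xm, Yk⁆ Ym
    have e3 := hQad Xk ⁅Xm, Ym⁆ Yk
    rw [leibniz_lie, ← lie_skew ⁅Xm, Yk⁆ Ym] at e1
    rw [← lie_skew] at e1 e2 e3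
    simp only [map_add, map_neg, LinearMap.neg_apply] at e1 e2 e3
    linarith
  have hPX : Pt X = t • Xk + Xm := by rw [hXdec, map_add, hPtk _ hXk, hPtm _ hXm]
  have hPY : Pt Y = t • Yk + Ym := by rw [hYdec, map_add, hPtk _ hYk, hPtm _ hYm]
  have hXY : ⁅X, Y⁆ = ⁅Xk, Yk⁆ + ⁅Xm, Ym⁆ + (⁅Xk, Ym⁆ + ⁅Xm, Yk⁆) := by
    rw [hXdec, hYdec]; simp only [add_lie, lie_add]; abel
  have hB : puttmannB Pt X Y = ((1 - t) / 2) • (⁅Xk, Ym⁆ - ⁅Xm, Yk⁆) := by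
    unfold puttmannB
    rw [hPX, hPY, hXdec, hYdec]
    simp only [add_lie, lie_add, smul_lie, lie_smul]
    module
  have hBX : puttmannB Pt X X = (1 - t) • ⁅Xk, Xm⁆ := by
    unfold puttmannB
    rw [hPX, hXdec]
    simp only [add_lie, lie_add, smul_lie, lie_smul, lie_self, ← lie_skew Xm Xk]
    module
  have hBY : puttmannB Pt Y Y = (1 - t) • ⁅Yk, Ym⁆ := by
    unfold puttmannB
    rw [hPY, hYdec]
    simp only [add_lie, lie_add, smul_lie, lie_smul, lie_self, ← lie_skew Ym Yk]
    module
  have hS : ⁅Pt X, Y⁆ + ⁅X, Pt Y⁆ = (2 : ℝ) • (t • ⁅Xk, Yk⁆ + ⁅Xm, Ym⁆)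
      + (1 + t) • (⁅Xk, Ym⁆ + ⁅Xm, Yk⁆) := by
    rw [hPX, hPY, hXdec, hYdec]
    simp only [add_lie, lie_add, smul_lie, lie_smul]
    module
  have hkap : puttmannKappa Q Pt PtInv X Y
      = t / 4 * Q (⁅Xk, Yk⁆ + (3 - 2 * t) • ⁅Xm, Ym⁆) (⁅Xk, Yk⁆ + (3 - 2 * t) • ⁅Xm, Ym⁆)
        + (1 - t) ^ 3 * Q ⁅Xm, Ym⁆ ⁅Xm, Ym⁆
        + t ^ 2 / 4 * Q (⁅Xk, Ym⁆ + ⁅Xm, Yk⁆) (⁅Xk, Ym⁆ + ⁅Xm, Yk⁆) := by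
    unfold puttmannKappa
    rw [hS, hB, hBX, hBY, hPm _ (m.smul_mem _ (m.sub_mem hc hd)), hPm _ (m.smul_mem _ hy), hXY]
    simp only [map_add Pt]
    rw [hPtk _ ha, hPtk _ hb, hPtm _ hc, hPtm _ hd]
    generalize ⁅Xk, Xm⁆ = x at *
    generalize ⁅Yk, Ym⁆ = y at *
    generalize ⁅Xk, Yk⁆ = a at *
    generalize ⁅Xm, Ym⁆ = b at *
    generalize ⁅Xk, Ym⁆ = c at *
    generalize ⁅Xm, Yk⁆ = d at *
    have ac := (hm c).1 hc a ha
    have bc := (hm c).1 hc b hb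
    have ad := (hm d).1 hd a ha
    have bd := (hm d).1 hd b hb
    simp only [map_add, map_sub, map_smul, LinearMap.add_apply, LinearMap.sub_apply,
      LinearMap.smul_apply, smul_eq_mul, hkey, hQsymm c a, hQsymm c b, hQsymm d a, hQsymm d b,
      hQsymm b a, hQsymm d c, ac, bc, ad, bd]
    ring
  rw [hkap]
  constructor
  · intro h
    have h1 := mul_nonneg (by positivity : 0 ≤ t / 4)
      (hpos (⁅Xk, Yk⁆ + (3 - 2 * t) • ⁅Xm, Ym⁆))
    have p3 : 0 < (1 - t) ^ 3 := pow_pos (by linarith) 3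
    have h2 := mul_nonneg p3.le (hpos ⁅Xm, Ym⁆)
    have h3 := mul_nonneg (by positivity : 0 ≤ t ^ 2 / 4) (hpos (⁅Xk, Ym⁆ + ⁅Xm, Yk⁆))
    have z1 := hzero _ ((mul_eq_zero.1 (le_antisymm (by linarith) h1)).resolve_left
      (by positivity))
    have z2 := hzero _ ((mul_eq_zero.1 (le_antisymm (by linarith) h2)).resolve_left p3.ne')
    have z3 := hzero _ ((mul_eq_zero.1 (le_antisymm (by linarith) h3)).resolve_left
      (by positivity))
    rw [z2, smul_zero, add_zero] at z1
    refine ⟨?_, z1, z2⟩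
    rw [hXY, z1, z2, z3]; simp
  · rintro ⟨h1, h2, h3⟩
    rw [hXY, h2, h3, add_zero, zero_add] at h1
    rw [h1, h2, h3]; simp
end

section
/- Let (V,Q) be a finite-dimensional real inner product space, P : V → V a Q-symmetric positive-definite automorphism, and t > 0. Equip V × V with the inner product ⟨(v₁,w₁),(v₂,w₂)⟩ = Q(Pv₁,v₂) + (1/t)·Q(w₁,w₂), and for X ∈ V set h(X) := (P⁻¹(P⁻¹ + t·id)⁻¹X, −t(P⁻¹ + t·id)⁻¹X) ∈ V × V. Then: (i) the difference of the two components of h(X) equals X; (ii) h(X) is orthogonal to every diagonal vector (Z,Z), Z ∈ V; and (iii) ⟨h(X),h(X)⟩ = Q((P⁻¹ + t·id)⁻¹X, X). Consequently the Cheeger-deformed metric is given by the symmetric endomorphism P_t = (P⁻¹ + t·id)⁻¹. -/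
open scoped RealInnerProductSpace

/-- **Cheeger deformation formula (equation (2) in Ziller's survey).**
Let `(V,Q)` be a finite-dimensional real inner product space, `P` a `Q`-symmetric
positive-definite automorphism with inverse `Pinv`, `t > 0`, and let
`S = (P⁻¹ + t·id)⁻¹`.  Equip `V × V` with the inner product
`⟨(v₁,w₁),(v₂,w₂)⟩ = Q(Pv₁,v₂) + (1/t)Q(w₁,w₂)` and set
`h(X) = (P⁻¹(P⁻¹+t·id)⁻¹X, −t(P⁻¹+t·id)⁻¹X)`.  Then:
(i) the difference of the two components of `h(X)` is `X`;
(ii) `h(X)` is orthogonal to every diagonal vector `(Z,Z)`;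
(iii) `⟨h(X),h(X)⟩ = Q((P⁻¹+t·id)⁻¹X, X)`.
Consequently the Cheeger-deformed metric is given by `P_t = (P⁻¹ + t·id)⁻¹`. -/
theorem cheeger_deformation_horizontal_lift
    {V : Type*} [NormedAddCommGroup V] [InnerProductSpace ℝ V]
    [FiniteDimensional ℝ V]
    (P Pinv S : V →ₗ[ℝ] V)
    (hPsymm : ∀ x y : V, ⟪P x, y⟫ = ⟪x, P y⟫)
    (hPpos : ∀ x : V, x ≠ 0 → 0 < ⟪P x, x⟫)
    (hPinv₁ : Pinv.comp P = LinearMap.id)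
    (hPinv₂ : P.comp Pinv = LinearMap.id)
    (t : ℝ) (ht : 0 < t)
    (hS₁ : S.comp (Pinv + t • LinearMap.id) = LinearMap.id)
    (hS₂ : (Pinv + t • LinearMap.id).comp S = LinearMap.id)
    (ip : V × V → V × V → ℝ)
    (hip : ∀ v w : V × V, ip v w = ⟪P v.1, w.1⟫ + (1 / t) * ⟪v.2, w.2⟫)
    (h : V → V × V)
    (hh : ∀ X : V, h X = (Pinv (S X), -(t • S X))) :
    (∀ X : V, (h X).1 - (h X).2 = X)
    ∧ (∀ X Z : V, ip (h X) (Z, Z) = 0)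
    ∧ (∀ X : V, ip (h X) (h X) = ⟪S X, X⟫) := by
  have hP : ∀ x, P (Pinv x) = x := fun x => by
    simpa using LinearMap.congr_fun hPinv₂ x
  have hS : ∀ X, Pinv (S X) + t • S X = X := fun X => by
    simpa using LinearMap.congr_fun hS₂ X
  have ht' : t ≠ 0 := ht.ne'
  refine ⟨fun X => ?_, fun X Z => ?_, fun X => ?_⟩
  · rw [hh]
    simpa using hS X
  · rw [hip, hh]
    simp only [hP, inner_neg_left, real_inner_smul_left]
    field_simp
    ring
  · have key : ⟪S X, X⟫ = ⟪S X, Pinv (S X)⟫ + t * ⟪S X, S X⟫ := by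
      rw [← real_inner_smul_right, ← inner_add_right, hS]
    rw [hip, hh, key]
    simp only [hP, inner_neg_left, inner_neg_right, real_inner_smul_left,
      real_inner_smul_right]
    field_simp
    try ring
end

section
/- Identify 𝔰𝔲(3) with the traceless skew-Hermitian 3×3 complex matrices, with inner product Q(X,Y) = Re tr(XY*). Let 𝔨 = {blockdiag(A, −tr A) : A a 2×2 skew-Hermitian matrix} and let 𝔪 be its Q-orthogonal complement, consisting of the matrices Y_v = [[0₂ₓ₂, v],[−v*, 0]] with v ∈ ℂ². Suppose X, Y ∈ 𝔰𝔲(3) span a 2-dimensional real subspace and satisfy ⁅X,Y⁆ = 0, ⁅X_𝔨,Y_𝔨⁆ = 0, and ⁅X_𝔪,Y_𝔪⁆ = 0 (orthogonal projections). Then span{X,Y} contains either the matrix diag(i,i,−2i), or a matrix of the form k·diag(−2i,i,i)·k⁻¹ for some k ∈ SU(3) of the block form blockdiag(B, (det B)⁻¹) with B ∈ U(2). -/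
open Matrix Complex

/-- The embedding `A ↦ blockdiag(A, c)` of a `2×2` complex matrix together with a
scalar `c` into `3×3` complex matrices. -/
def blockDiag2 (A : Matrix (Fin 2) (Fin 2) ℂ) (c : ℂ) : Matrix (Fin 3) (Fin 3) ℂ :=
  Matrix.of fun i j =>
    if hi : (i : ℕ) < 2 then
      if hj : (j : ℕ) < 2 then A ⟨i, hi⟩ ⟨j, hj⟩ else 0
    else if (j : ℕ) < 2 then 0 else c

/-- The matrix `Y_v = [[0₂ₓ₂, v],[−v*, 0]] ∈ 𝔰𝔲(3)` attached to a vector `v ∈ ℂ²`. -/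
def offBlock (v : Fin 2 → ℂ) : Matrix (Fin 3) (Fin 3) ℂ :=
  Matrix.of fun i j =>
    if hi : (i : ℕ) < 2 then
      if (j : ℕ) < 2 then 0 else v ⟨i, hi⟩
    else if hj : (j : ℕ) < 2 then -(starRingEnd ℂ) (v ⟨j, hj⟩) else 0

open scoped ComplexConjugate

lemma real_dep (v w : Fin 2 → ℂ)
    (h : ∀ i j, v i * conj (w j) = w i * conj (v j)) :
    ∃ a b : ℝ, (a ≠ 0 ∨ b ≠ 0) ∧ ∀ i, (a : ℂ) * v i + b * w i = 0 := by
  by_cases hv : ∃ j, v j ≠ 0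
  · obtain ⟨j, hj⟩ := hv
    refine ⟨(v j * conj (w j)).re, -Complex.normSq (v j), Or.inr ?_, fun i => ?_⟩
    · simpa using hj
    · have h1 : conj (v j * conj (w j)) = v j * conj (w j) := by
        rw [map_mul, Complex.conj_conj, h j j]; ring
      rw [Complex.conj_eq_iff_re.mp h1]
      push_cast
      rw [← Complex.mul_conj]
      linear_combination v j * h i j
  · push Not at hv
    exact ⟨1, 0, Or.inl one_ne_zero, fun i => by simp [hv i]⟩

lemma conj_of_unit (A : Matrix (Fin 2) (Fin 2) ℂ) (hA : Aᴴ = -A) (htr : A.trace = -I)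
    (u0 u1 : ℂ) (hu : u0 * conj u0 + u1 * conj u1 = 1)
    (e0 : A 0 0 * u0 + A 0 1 * u1 = I * u0) (e1 : A 1 0 * u0 + A 1 1 * u1 = I * u1) :
    ∃ B : Matrix (Fin 2) (Fin 2) ℂ, B * Bᴴ = 1 ∧
      blockDiag2 A I = blockDiag2 B (B.det)⁻¹
                * Matrix.diagonal ![-2 * Complex.I, Complex.I, Complex.I]
                * (blockDiag2 B (B.det)⁻¹)⁻¹ := by
  have a00 : conj (A 0 0) = - A 0 0 := by simpa using congrFun (congrFun hA 0) 0
  have a01 : conj (A 1 0) = - A 0 1 := by simpa using congrFun (congrFun hA 0) 1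
  have a10 : conj (A 0 1) = - A 1 0 := by simpa using congrFun (congrFun hA 1) 0
  have a11 : conj (A 1 1) = - A 1 1 := by simpa using congrFun (congrFun hA 1) 1
  have f0 := congrArg conj e0
  have f1 := congrArg conj e1
  simp only [map_add, map_mul, a00, a01, a10, a11, Complex.conj_I] at f0 f1
  rw [Matrix.trace_fin_two] at htr
  have hdet : (!![-conj u1, u0; conj u0, u1] : Matrix (Fin 2) (Fin 2) ℂ).det = -1 := by
    rw [Matrix.det_fin_two]; simp; linear_combination -hu
  refine ⟨!![-conj u1, u0; conj u0, u1], ?_, ?_⟩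
  · ext i j
    fin_cases i <;> fin_cases j <;> simp [Matrix.mul_apply, Fin.sum_univ_two]
    · linear_combination hu
    · ring
    · ring
    · linear_combination hu
  · rw [hdet]
    have hK : IsUnit (blockDiag2 !![-conj u1, u0; conj u0, u1] (-1)⁻¹).det := by
      rw [Matrix.det_fin_three]
      simp [blockDiag2]
      intro h
      have h2 : (0 : ℂ) = 1 := by linear_combination hu - h
      exact zero_ne_one h2
    have key : blockDiag2 A I * blockDiag2 !![-conj u1, u0; conj u0, u1] (-1)⁻¹
        = blockDiag2 !![-conj u1, u0; conj u0, u1] (-1)⁻¹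
          * Matrix.diagonal ![-2 * Complex.I, Complex.I, Complex.I] := by
      ext i j
      fin_cases i <;> fin_cases j <;>
        simp [Matrix.mul_apply, Fin.sum_univ_three, blockDiag2, Matrix.diagonal_apply]
      · linear_combination -f1 - conj u1 * htr
      · linear_combination e0
      · linear_combination f0 + conj u0 * htr
      · linear_combination e1
    rw [← key, Matrix.mul_assoc, Matrix.mul_nonsing_inv _ hK, Matrix.mul_one]

lemma conj_of_eigen (A : Matrix (Fin 2) (Fin 2) ℂ) (hA : Aᴴ = -A)
    (hN : A ≠ 0) (u : Fin 2 → ℂ) (hu : u ≠ 0)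
    (e0 : A 0 0 * u 0 + A 0 1 * u 1 = -A.trace * u 0)
    (e1 : A 1 0 * u 0 + A 1 1 * u 1 = -A.trace * u 1) :
    ∃ s : ℝ, ∃ B : Matrix (Fin 2) (Fin 2) ℂ, B * Bᴴ = 1 ∧
      s • blockDiag2 A (-A.trace) = blockDiag2 B (B.det)⁻¹
                * Matrix.diagonal ![-2 * Complex.I, Complex.I, Complex.I]
                * (blockDiag2 B (B.det)⁻¹)⁻¹ := by
  have a00 : conj (A 0 0) = - A 0 0 := by simpa using congrFun (congrFun hA 0) 0
  have a01 : conj (A 1 0) = - A 0 1 := by simpa using congrFun (congrFun hA 0) 1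
  have a10 : conj (A 0 1) = - A 1 0 := by simpa using congrFun (congrFun hA 1) 0
  have a11 : conj (A 1 1) = - A 1 1 := by simpa using congrFun (congrFun hA 1) 1
  -- trace is `t * I`
  obtain ⟨t, ht⟩ : ∃ t : ℝ, A.trace = t * I := by
    refine ⟨A.trace.im, ?_⟩
    have : conj A.trace = -A.trace := by
      rw [Matrix.trace_fin_two, map_add, a00, a11]; ring
    have h2 := congrArg Complex.re this
    simp only [Complex.conj_re, Complex.neg_re] at h2
    apply Complex.ext <;> simp
    linarith
  have ht0 : t ≠ 0 := by
    intro h0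
    rw [h0] at ht
    simp only [Complex.ofReal_zero, zero_mul] at ht
    rw [ht] at e0 e1
    rw [Matrix.trace_fin_two] at ht
    have hd : A 0 0 * A 1 1 - A 0 1 * A 1 0 = 0 := by
      by_contra hd
      apply hu
      have h0 : u 0 = 0 := by
        apply (mul_eq_zero.mp _).resolve_left hd
        linear_combination A 1 1 * e0 - A 0 1 * e1
      have h1 : u 1 = 0 := by
        apply (mul_eq_zero.mp _).resolve_left hd
        linear_combination A 0 0 * e1 - A 1 0 * e0
      ext i; fin_cases i <;> simp [h0, h1]
    have hs : (Complex.normSq (A 0 0) + Complex.normSq (A 0 1) : ℝ) = 0 := by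
      have : ((Complex.normSq (A 0 0) + Complex.normSq (A 0 1) : ℝ) : ℂ) = 0 := by
        push_cast
        rw [← Complex.mul_conj, ← Complex.mul_conj, a00, a10]
        linear_combination hd - A 0 0 * ht
      exact_mod_cast this
    have n0 := Complex.normSq_nonneg (A 0 0)
    have n1 := Complex.normSq_nonneg (A 0 1)
    have z0 : A 0 0 = 0 := Complex.normSq_eq_zero.mp (by linarith)
    have z1 : A 0 1 = 0 := Complex.normSq_eq_zero.mp (by linarith)
    have z2 : A 1 0 = 0 := by rw [z1] at a10; simpa using a10.symm
    have z3 : A 1 1 = 0 := by rw [z0] at ht; simpa using ht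
    apply hN
    ext i j; fin_cases i <;> fin_cases j <;> simp [z0, z1, z2, z3]
  have htc : (t : ℂ) ≠ 0 := by exact_mod_cast ht0
  -- normalisation
  have hpos : 0 < Complex.normSq (u 0) + Complex.normSq (u 1) := by
    have n0 := Complex.normSq_nonneg (u 0)
    have n1 := Complex.normSq_nonneg (u 1)
    by_contra hle
    apply hu
    have z0 : u 0 = 0 := Complex.normSq_eq_zero.mp (by linarith)
    have z1 : u 1 = 0 := Complex.normSq_eq_zero.mp (by linarith)
    ext i; fin_cases i <;> simp [z0, z1]
  set n := Real.sqrt (Complex.normSq (u 0) + Complex.normSq (u 1)) with hn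
  have hn2 : n * n = Complex.normSq (u 0) + Complex.normSq (u 1) :=
    Real.mul_self_sqrt hpos.le
  have hn0 : n ≠ 0 := (Real.sqrt_pos.mpr hpos).ne'
  have hnc : (n : ℂ) ≠ 0 := by exact_mod_cast hn0
  have hn2c : (n : ℂ) * n = u 0 * conj (u 0) + u 1 * conj (u 1) := by
    rw [Complex.mul_conj, Complex.mul_conj]; exact_mod_cast hn2
  obtain ⟨B, hB, hM⟩ := conj_of_unit ((-t⁻¹ : ℝ) • A)
    (by rw [Matrix.conjTranspose_smul, hA]; simp)
    (by rw [Matrix.trace_smul, ht, Complex.real_smul]; push_cast; field_simp)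
    (u 0 / n) (u 1 / n)
    (by simp only [map_div₀, Complex.conj_ofReal]; field_simp; linear_combination -hn2c)
    (by
      rw [ht] at e0
      simp only [Matrix.smul_apply, Complex.real_smul]; push_cast; field_simp
      linear_combination -e0)
    (by
      rw [ht] at e1
      simp only [Matrix.smul_apply, Complex.real_smul]; push_cast; field_simp
      linear_combination -e1)
  refine ⟨-t⁻¹, B, hB, ?_⟩
  rw [← hM, ht]
  ext i j
  fin_cases i <;> fin_cases j <;> simp [blockDiag2]
  field_simp

lemma comb_eq (A C : Matrix (Fin 2) (Fin 2) ℂ) (v w : Fin 2 → ℂ) (a b : ℝ)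
    (h : ∀ i, (a : ℂ) * v i + b * w i = 0) :
    a • (blockDiag2 A (-A.trace) + offBlock v) + b • (blockDiag2 C (-C.trace) + offBlock w)
      = blockDiag2 (a • A + b • C) (-(a • A + b • C).trace) := by
  have h0 := h 0
  have h1 := h 1
  have g0 := congrArg conj h0
  have g1 := congrArg conj h1
  simp only [map_add, map_mul, Complex.conj_ofReal, map_zero] at g0 g1
  ext i j
  fin_cases i <;> fin_cases j <;> simp [blockDiag2, offBlock, Matrix.trace_fin_two]
  · exact h0
  · exact h1
  · linear_combination -g0
  · linear_combination -g1
  · ring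

lemma eigen_of_comm (A C : Matrix (Fin 2) (Fin 2) ℂ) (c d : ℂ) (v : Fin 2 → ℂ)
    (h : blockDiag2 A c * (blockDiag2 C d + offBlock v)
      = (blockDiag2 C d + offBlock v) * blockDiag2 A c) :
    A 0 0 * v 0 + A 0 1 * v 1 = c * v 0 ∧ A 1 0 * v 0 + A 1 1 * v 1 = c * v 1 := by
  have h0 := congrFun (congrFun h 0) 2
  have h1 := congrFun (congrFun h 1) 2
  simp [Matrix.mul_apply, Fin.sum_univ_three, blockDiag2, offBlock] at h0 h1
  exact ⟨by linear_combination h0, by linear_combination h1⟩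

/-- **Ziller, Lemma 4.4.**  In `𝔰𝔲(3)` with `Q(X,Y) = Re tr(XY*)`, with
`𝔨 = {blockdiag(A, −tr A)}` (the Lie algebra of `U(2) ⊂ SU(3)`) and `𝔪` its
`Q`-orthogonal complement consisting of the `Y_v`, suppose `X, Y` span a
2-plane and satisfy `⁅X,Y⁆ = ⁅X_𝔨,Y_𝔨⁆ = ⁅X_𝔪,Y_𝔪⁆ = 0`.  Then the span of
`X, Y` contains either `diag(i,i,−2i)` or a conjugate `k·diag(−2i,i,i)·k⁻¹`
with `k = blockdiag(B, (det B)⁻¹)`, `B ∈ U(2)`. -/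
theorem zero_curvature_plane_su3
    (X Y Xk Xm Yk Ym : Matrix (Fin 3) (Fin 3) ℂ)
    (hX : Xᴴ = -X) (hXtr : X.trace = 0)
    (hY : Yᴴ = -Y) (hYtr : Y.trace = 0)
    (hind : LinearIndependent ℝ ![X, Y])
    (hXk : ∃ A : Matrix (Fin 2) (Fin 2) ℂ, Aᴴ = -A ∧ Xk = blockDiag2 A (-A.trace))
    (hXm : ∃ v : Fin 2 → ℂ, Xm = offBlock v)
    (hYk : ∃ A : Matrix (Fin 2) (Fin 2) ℂ, Aᴴ = -A ∧ Yk = blockDiag2 A (-A.trace))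
    (hYm : ∃ v : Fin 2 → ℂ, Ym = offBlock v)
    (hXdec : X = Xk + Xm) (hYdec : Y = Yk + Ym)
    (hb : X * Y - Y * X = 0)
    (hbk : Xk * Yk - Yk * Xk = 0)
    (hbm : Xm * Ym - Ym * Xm = 0) :
    ∃ M ∈ Submodule.span ℝ ({X, Y} : Set (Matrix (Fin 3) (Fin 3) ℂ)),
      M = Matrix.diagonal ![Complex.I, Complex.I, -2 * Complex.I]
      ∨ ∃ B : Matrix (Fin 2) (Fin 2) ℂ, B * Bᴴ = 1 ∧
          M = blockDiag2 B (B.det)⁻¹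
                * Matrix.diagonal ![-2 * Complex.I, Complex.I, Complex.I]
                * (blockDiag2 B (B.det)⁻¹)⁻¹ := by
  obtain ⟨A, hA, rfl⟩ := hXk
  obtain ⟨C, hC, rfl⟩ := hYk
  obtain ⟨v, rfl⟩ := hXm
  obtain ⟨w, rfl⟩ := hYm
  have hne : ∀ a b : ℝ, (a ≠ 0 ∨ b ≠ 0) → a • X + b • Y ≠ 0 := by
    intro a b hab h0
    obtain ⟨h1, h2⟩ := LinearIndependent.pair_iff.mp hind a b h0
    rcases hab with h | h
    · exact h h1
    · exact h h2
  have hmem : ∀ a b : ℝ, a • X + b • Y ∈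
      Submodule.span ℝ ({X, Y} : Set (Matrix (Fin 3) (Fin 3) ℂ)) :=
    fun a b => Submodule.mem_span_pair.mpr ⟨a, b, rfl⟩
  have hXY : X * Y = Y * X := sub_eq_zero.mp hb
  by_cases hvw : v = 0 ∧ w = 0
  · obtain ⟨rfl, rfl⟩ := hvw
    have a00 : conj (A 0 0) = - A 0 0 := by simpa using congrFun (congrFun hA 0) 0
    have a10 : conj (A 0 1) = - A 1 0 := by simpa using congrFun (congrFun hA 1) 0
    have a11 : conj (A 1 1) = - A 1 1 := by simpa using congrFun (congrFun hA 1) 1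
    have c00 : conj (C 0 0) = - C 0 0 := by simpa using congrFun (congrFun hC 0) 0
    have c10 : conj (C 0 1) = - C 1 0 := by simpa using congrFun (congrFun hC 1) 0
    have c11 : conj (C 1 1) = - C 1 1 := by simpa using congrFun (congrFun hC 1) 1
    have k00 := congrFun (congrFun hbk 0) 0
    have k01 := congrFun (congrFun hbk 0) 1
    have k10 := congrFun (congrFun hbk 1) 0
    simp [Matrix.mul_apply, Fin.sum_univ_three, blockDiag2] at k00 k01 k10
    obtain ⟨a, b, hab, hz⟩ := real_dep ![A 0 0 - A 1 1, A 0 1] ![C 0 0 - C 1 1, C 0 1] (by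
      intro i j
      fin_cases i <;> fin_cases j <;> simp [a00, a10, a11, c00, c10, c11]
      · ring
      · linear_combination -k10
      · linear_combination k01
      · linear_combination k00)
    have z0 := hz 0
    have z1 := hz 1
    simp at z0 z1
    have hcomb := comb_eq A C 0 0 a b (by simp)
    rw [← hXdec, ← hYdec] at hcomb
    set E := a • A + b • C with hE
    have hEs : Eᴴ = -E := by
      rw [hE]; simp [Matrix.conjTranspose_add, Matrix.conjTranspose_smul, hA, hC]; abel
    have E01 : E 0 1 = 0 := by simpa [hE] using z1
    have E11 : E 1 1 = E 0 0 := by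
      simp [hE]; linear_combination -z0
    have s00 : conj (E 0 0) = - E 0 0 := by simpa using congrFun (congrFun hEs 0) 0
    have s10 : conj (E 0 1) = - E 1 0 := by simpa using congrFun (congrFun hEs 1) 0
    have E10 : E 1 0 = 0 := by rw [E01] at s10; simpa using s10.symm
    have hre : (E 0 0).re = 0 := by
      have h2 := congrArg Complex.re s00
      simp only [Complex.conj_re, Complex.neg_re] at h2
      linarith
    have E00 : E 0 0 = ((E 0 0).im : ℂ) * I := by
      apply Complex.ext <;> simp [hre]
    generalize (E 0 0).im = t at E00
    have ht : t ≠ 0 := by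
      rintro rfl
      apply hne a b hab
      rw [hcomb]
      ext i j
      fin_cases i <;> fin_cases j <;>
        simp [blockDiag2, Matrix.trace_fin_two, E01, E10, E11, E00]
    have htc : (t : ℂ) ≠ 0 := by exact_mod_cast ht
    refine ⟨t⁻¹ • (a • X + b • Y), Submodule.smul_mem _ _ (hmem a b), Or.inl ?_⟩
    rw [hcomb]
    ext i j
    fin_cases i <;> fin_cases j <;>
      simp [blockDiag2, Matrix.trace_fin_two, E01, E10, E11, E00]
    all_goals field_simp
    all_goals ring
  · obtain ⟨a, b, hab, hz⟩ := real_dep v w (by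
      intro i j
      have h00 := congrFun (congrFun hbm 0) 0
      have h01 := congrFun (congrFun hbm 0) 1
      have h10 := congrFun (congrFun hbm 1) 0
      have h11 := congrFun (congrFun hbm 1) 1
      simp [Matrix.mul_apply, Fin.sum_univ_three, offBlock] at h00 h01 h10 h11
      fin_cases i <;> fin_cases j <;> simp
      · linear_combination -h00
      · linear_combination -h01
      · linear_combination -h10
      · linear_combination -h11)
    have hcomb := comb_eq A C v w a b hz
    rw [← hXdec, ← hYdec] at hcomb
    set E := a • A + b • C with hE
    have hEs : Eᴴ = -E := by
      rw [hE]; simp [Matrix.conjTranspose_add, Matrix.conjTranspose_smul, hA, hC]; abel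
    have hE0 : E ≠ 0 := by
      intro h0
      apply hne a b hab
      rw [hcomb, h0]
      ext i j
      fin_cases i <;> fin_cases j <;> simp [blockDiag2]
    have hcX : (a • X + b • Y) * X = X * (a • X + b • Y) := by
      simp [add_mul, mul_add, hXY]
    have hcY : (a • X + b • Y) * Y = Y * (a • X + b • Y) := by
      simp [add_mul, mul_add, hXY]
    rw [hcomb] at hcX hcY
    rw [hXdec] at hcX
    rw [hYdec] at hcY
    have hfin : ∃ u : Fin 2 → ℂ, u ≠ 0 ∧ E 0 0 * u 0 + E 0 1 * u 1 = -E.trace * u 0 ∧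
        E 1 0 * u 0 + E 1 1 * u 1 = -E.trace * u 1 := by
      by_cases hv : v = 0
      · exact ⟨w, fun hw => hvw ⟨hv, hw⟩, eigen_of_comm _ _ _ _ _ hcY⟩
      · exact ⟨v, hv, eigen_of_comm _ _ _ _ _ hcX⟩
    obtain ⟨u, hu, e0, e1⟩ := hfin
    obtain ⟨s, B, hB, hM⟩ := conj_of_eigen E hEs hE0 u hu e0 e1
    refine ⟨s • (a • X + b • Y), Submodule.smul_mem _ _ (hmem a b), Or.inr ⟨B, hB, ?_⟩⟩
    rw [hcomb, hM]
end

section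
/- Let A be a 2×2 traceless skew-Hermitian complex matrix and v ∈ ℂ². Set X = blockdiag(A, 0) ∈ 𝔰𝔲(3) and Y_v = [[0₂ₓ₂, v],[−v*, 0]] ∈ 𝔰𝔲(3). If A ≠ 0 and v ≠ 0, then the commutator X·Y_v − Y_v·X is nonzero. (More precisely, for any 2×2 skew-Hermitian A one has [blockdiag(A,−tr A), Y_v] = Y_{Av + (tr A)v}, and a nonzero traceless skew-Hermitian 2×2 matrix annihilates no nonzero vector.) -/
open Matrix Complex

/-- **Vertizontal condition for `S² → SU(3)/T² → ℂP²` (Ziller, Section 4).**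
For `A` a traceless skew-Hermitian `2×2` matrix and `v ∈ ℂ²`, with
`X = blockdiag(A,0)` and `Y_v = [[0,v],[−v*,0]]`: if `A ≠ 0` and `v ≠ 0` then
`[X, Y_v] ≠ 0`.  More precisely, for any `2×2` skew-Hermitian `A'` one has
`[blockdiag(A',−tr A'), Y_v] = Y_{A'v + (tr A')v}`, and a nonzero traceless
skew-Hermitian `2×2` matrix annihilates no nonzero vector. -/
theorem vertizontal_su3_flag
    (A : Matrix (Fin 2) (Fin 2) ℂ) (hA : Aᴴ = -A) (hAtr : A.trace = 0)
    (v : Fin 2 → ℂ) :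
    (A ≠ 0 → v ≠ 0 →
        blockDiag2 A 0 * offBlock v - offBlock v * blockDiag2 A 0 ≠ 0)
    ∧ (∀ A' : Matrix (Fin 2) (Fin 2) ℂ, A'ᴴ = -A' →
        blockDiag2 A' (-A'.trace) * offBlock v
            - offBlock v * blockDiag2 A' (-A'.trace)
          = offBlock (A'.mulVec v + A'.trace • v))
    ∧ (A ≠ 0 → ∀ w : Fin 2 → ℂ, w ≠ 0 → A.mulVec w ≠ 0) := by
  have key : A ≠ 0 → ∀ w : Fin 2 → ℂ, w ≠ 0 → A.mulVec w ≠ 0 := by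
    intro hne w hw h0
    apply hne
    have hdet : A.det = 0 := Matrix.exists_mulVec_eq_zero_iff.mp ⟨w, hw, h0⟩
    rw [Matrix.det_fin_two] at hdet
    rw [Matrix.trace_fin_two] at hAtr
    have h00 := congrFun (congrFun hA 0) 0
    have h01 := congrFun (congrFun hA 0) 1
    simp only [Matrix.conjTranspose_apply, Matrix.neg_apply, Complex.ext_iff, Complex.star_def,
      Complex.conj_re, Complex.conj_im, Complex.neg_re, Complex.neg_im, Complex.add_re,
      Complex.add_im, Complex.zero_re, Complex.zero_im, Complex.sub_re,
      Complex.mul_re] at h00 h01 hAtr hdet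
    obtain ⟨a1, a2⟩ := h00
    obtain ⟨b1, b2⟩ := h01
    obtain ⟨t1, t2⟩ := hAtr
    have d := hdet.1
    have e1 : (A 0 0).re = 0 := by linarith
    have e2 : (A 1 1).re = 0 := by linarith
    have e3 : (A 1 1).im = -(A 0 0).im := by linarith
    have e4 : (A 1 0).im = (A 0 1).im := by linarith
    rw [e1, e2, e3, b1, e4] at d
    have f1 : (A 0 0).im = 0 := by nlinarith [sq_nonneg (A 0 0).im, sq_nonneg (A 0 1).re, sq_nonneg (A 0 1).im]
    have f2 : (A 0 1).re = 0 := by nlinarith [sq_nonneg (A 0 0).im, sq_nonneg (A 0 1).re, sq_nonneg (A 0 1).im]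
    have f3 : (A 0 1).im = 0 := by nlinarith [sq_nonneg (A 0 0).im, sq_nonneg (A 0 1).re, sq_nonneg (A 0 1).im]
    ext i j
    fin_cases i <;> fin_cases j <;> apply Complex.ext <;> simp [e1, e2, e3, e4, b1, f1, f2, f3]
  have comm : ∀ A' : Matrix (Fin 2) (Fin 2) ℂ, A'ᴴ = -A' →
        blockDiag2 A' (-A'.trace) * offBlock v
            - offBlock v * blockDiag2 A' (-A'.trace)
          = offBlock (A'.mulVec v + A'.trace • v) := by
    intro B hB
    have h : ∀ i j, (starRingEnd ℂ) (B i j) = - B j i := fun i j => by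
      simpa using congrFun (congrFun hB j) i
    ext i j
    fin_cases i <;> fin_cases j <;>
      simp [blockDiag2, offBlock, Matrix.mul_apply, Fin.sum_univ_three, Matrix.mulVec,
        dotProduct, Fin.sum_univ_two, Matrix.trace_fin_two, h] <;> ring
  refine ⟨?_, comm, key⟩
  intro hne hv h
  have c := comm A hA
  rw [hAtr, neg_zero, h, zero_smul, add_zero] at c
  apply key hne v hv
  ext i
  fin_cases i
  · simpa [offBlock] using (congrFun (congrFun c 0) 2).symm
  · simpa [offBlock] using (congrFun (congrFun c 1) 2).symm
end

section
/- Let p, q be integers with pq > 0, let a ∈ ℝ, z ∈ ℂ with (a,z) ≠ (0,0), and let v ∈ ℂ² with v ≠ 0. Set A = [[i(2q+p)a, z],[−conj(z), −i(q+2p)a]]. Then A·v + i(q−p)a·v ≠ 0; equivalently, i(p−q)a is not an eigenvalue of A unless a = 0 and z = 0. -/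
open Matrix Complex

/-- **Vertizontal condition for the Aloff–Wallach spaces `W_{p,q}` (Ziller,
Section 4).**  Let `p, q` be integers with `pq > 0`, `a ∈ ℝ`, `z ∈ ℂ` with
`(a,z) ≠ (0,0)`, and `v ∈ ℂ²` nonzero.  With
`A = [[i(2q+p)a, z],[−z̄, −i(q+2p)a]]` one has `Av + i(q−p)a·v ≠ 0`;
equivalently, `i(p−q)a` is not an eigenvalue of `A` unless `a = 0` and `z = 0`. -/
theorem vertizontal_aloff_wallach
    (p q : ℤ) (hpq : 0 < p * q) (a : ℝ) (z : ℂ)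
    (haz : (a, z) ≠ (0, 0)) (v : Fin 2 → ℂ) (hv : v ≠ 0) :
    (!![Complex.I * ((2 * q + p : ℤ) : ℂ) * (a : ℂ), z;
        -(starRingEnd ℂ) z, -(Complex.I * ((q + 2 * p : ℤ) : ℂ) * (a : ℂ))]).mulVec v
      + (Complex.I * ((q - p : ℤ) : ℂ) * (a : ℂ)) • v ≠ 0 := by
  intro h
  have e0 := congrFun h 0
  have e1 := congrFun h 1
  simp [Matrix.mulVec, dotProduct, Fin.sum_univ_two] at e0 e1
  have hpq' : (0 : ℝ) < (p : ℝ) * q := by exact_mod_cast hpq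
  have hd : (0 : ℝ) < 9 * (p * q) * a ^ 2 + Complex.normSq z := by
    by_cases ha : a = 0
    · have hz : z ≠ 0 := by
        rintro rfl
        exact haz (by rw [ha])
      have := Complex.normSq_pos.mpr hz
      simpa [ha] using this
    · have := Complex.normSq_nonneg z
      positivity
  have hd' : (9 * (p * q) * (a : ℂ) ^ 2 + z * (starRingEnd ℂ) z) ≠ 0 := by
    rw [Complex.mul_conj]
    exact_mod_cast hd.ne'
  have h0 : (9 * (p * q) * (a : ℂ) ^ 2 + z * (starRingEnd ℂ) z) * v 0 = 0 := by
    linear_combination (-3 * Complex.I * p * a) * e0 - z * e1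
      + (9 * p * q * (a : ℂ) ^ 2 * v 0) * Complex.I_sq
  have h1 : (9 * (p * q) * (a : ℂ) ^ 2 + z * (starRingEnd ℂ) z) * v 1 = 0 := by
    linear_combination (3 * Complex.I * q * a) * e1 + (starRingEnd ℂ) z * e0
      + (9 * p * q * (a : ℂ) ^ 2 * v 1) * Complex.I_sq
  apply hv
  ext i
  fin_cases i
  · exact (mul_eq_zero.mp h0).resolve_left hd'
  · exact (mul_eq_zero.mp h1).resolve_left hd'
end

section
/- Let Sp(2) denote the group of 2×2 quaternionic matrices A with A·A* = I (conjugate-transpose with respect to quaternionic conjugation), and let Sp(1) be the group of unit quaternions. The action of Sp(1) on Sp(2) defined by q ⋆ A = diag(q,q)·A·diag(q,1)⁻¹ is free: if q is a unit quaternion and A ∈ Sp(2) satisfies diag(q,q)·A·diag(q,1)⁻¹ = A, then q = 1. -/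
open Matrix Quaternion

/-- **Freeness of the Gromoll–Meyer action (Theorem 2.2 setup).**  The action
of the unit quaternions `Sp(1)` on `Sp(2) = {A ∈ M₂(ℍ) : AA* = 1}` given by
`q ⋆ A = diag(q,q)·A·diag(q,1)⁻¹` is free: if `‖q‖ = 1` and
`diag(q,q)·A·diag(q⁻¹,1) = A` for some `A ∈ Sp(2)`, then `q = 1`. -/
theorem gromoll_meyer_action_free
    (q : Quaternion ℝ) (hq : ‖q‖ = 1)
    (A : Matrix (Fin 2) (Fin 2) (Quaternion ℝ)) (hA : A * Aᴴ = 1)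
    (hfix : Matrix.diagonal ![q, q] * A * Matrix.diagonal ![q⁻¹, 1] = A) :
    q = 1 := by
  by_contra hne
  -- the second column of the fixed-point equation reads `q * A i 1 = A i 1`
  have hcol : ∀ i, A i 1 = 0 := by
    intro i
    have h := congrFun (congrFun hfix i) 1
    rw [Matrix.mul_diagonal, Matrix.diagonal_mul] at h
    have h2 : q * A i 1 = A i 1 := by
      fin_cases i <;> simpa using h
    have h3 : (q - 1) * A i 1 = 0 := by rw [sub_mul, one_mul, h2, sub_self]
    exact (mul_eq_zero.mp h3).resolve_left (sub_ne_zero.mpr hne)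
  -- so the rows of `A` cannot be orthonormal
  have h00 : A 0 0 * star (A 0 0) = 1 := by
    simpa [Matrix.mul_apply, hcol] using congrFun (congrFun hA 0) 0
  have h11 : A 1 0 * star (A 1 0) = 1 := by
    simpa [Matrix.mul_apply, hcol] using congrFun (congrFun hA 1) 1
  have h01 : A 0 0 * star (A 1 0) = 0 := by
    have h := congrFun (congrFun hA 0) 1
    rw [Matrix.mul_apply, Fin.sum_univ_two] at h
    simpa only [Matrix.conjTranspose_apply, hcol, zero_mul, add_zero,
      Matrix.one_apply_ne (zero_ne_one : (0 : Fin 2) ≠ 1)] using h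
  rcases mul_eq_zero.mp h01 with h | h
  · rw [h, zero_mul] at h00
    exact zero_ne_one h00
  · rw [h, mul_zero] at h11
    exact zero_ne_one h11
end

section
/- Let k = (k₁,k₂,k₃) and l = (l₁,l₂,l₃) be triples of integers with k₁+k₂+k₃ = l₁+l₂+l₃, and consider the action of the circle group S¹ = {z ∈ ℂ : |z| = 1} on SU(3) given by z ⋆ g = diag(z^{k₁}, z^{k₂}, z^{k₃}) · g · diag(z^{l₁}, z^{l₂}, z^{l₃})⁻¹. This action is free (i.e. z ⋆ g = g for some g ∈ SU(3) implies z = 1) if and only if gcd(k₁ − l_i, k₂ − l_j) = 1 for all i ≠ j with i, j ∈ {1,2,3}. -/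
open Matrix Complex


lemma esch_fix_iff (z : ℂ) (hz : z ≠ 0) (k l : Fin 3 → ℤ) (g : Matrix (Fin 3) (Fin 3) ℂ) :
    Matrix.diagonal (fun i => z ^ (k i)) * g * (Matrix.diagonal (fun i => z ^ (l i)))⁻¹ = g ↔
      ∀ i j, g i j ≠ 0 → z ^ (k i) = z ^ (l j) := by
  have hu : IsUnit (Matrix.diagonal (fun i => z ^ (l i))).det := by
    rw [Matrix.det_diagonal, isUnit_iff_ne_zero]
    exact Finset.prod_ne_zero_iff.mpr fun i _ => zpow_ne_zero _ hz
  have h1 : Matrix.diagonal (fun i => z ^ (k i)) * g * (Matrix.diagonal (fun i => z ^ (l i)))⁻¹ = g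
      ↔ Matrix.diagonal (fun i => z ^ (k i)) * g = g * Matrix.diagonal (fun i => z ^ (l i)) := by
    constructor
    · intro h
      conv_rhs => rw [← h]
      rw [Matrix.nonsing_inv_mul_cancel_right _ _ hu]
    · intro h
      rw [h, Matrix.mul_nonsing_inv_cancel_right _ _ hu]
  rw [h1, ← Matrix.ext_iff]
  refine forall_congr' fun i => forall_congr' fun j => ?_
  rw [Matrix.diagonal_mul, Matrix.mul_diagonal, mul_comm]
  constructor
  · intro h h0
    exact mul_left_cancel₀ h0 h
  · intro h
    by_cases h0 : g i j = 0
    · simp [h0]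
    · rw [h h0]

lemma esch_exists_root (d : ℕ) (hd : d ≠ 1) : ∃ z : ℂ, ‖z‖ = 1 ∧ z ≠ 1 ∧ z ^ d = 1 := by
  rcases eq_or_ne d 0 with rfl | h0
  · exact ⟨-1, by simp, by norm_num, by simp⟩
  · have hp := Complex.isPrimitiveRoot_exp d h0
    exact ⟨_, hp.norm'_eq_one h0, hp.ne_one (by omega), hp.pow_eq_one⟩

lemma esch_zpow_eq (z : ℂ) (hz : z ≠ 0) (a b : ℤ) : z ^ a = z ^ b ↔ z ^ (a - b) = 1 := by
  rw [zpow_sub₀ hz, div_eq_one_iff_eq (zpow_ne_zero _ hz)]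

lemma esch_exists_perm : ∀ i j : Fin 3, i ≠ j → ∃ σ : Equiv.Perm (Fin 3), σ 0 = i ∧ σ 1 = j := by
  decide

/-- **Freeness criterion for the Eschenburg biquotient action.**  For triples of
integers `k, l` with `∑kᵢ = ∑lᵢ`, the circle action on `SU(3)` given by
`z ⋆ g = diag(z^{k₁},z^{k₂},z^{k₃})·g·diag(z^{l₁},z^{l₂},z^{l₃})⁻¹` is free
(i.e. `z ⋆ g = g` for some `g ∈ SU(3)` implies `z = 1`) if and only if
`gcd(k₁ − lᵢ, k₂ − lⱼ) = 1` for all `i ≠ j`. -/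
theorem eschenburg_action_free_iff
    (k l : Fin 3 → ℤ) (hsum : ∑ i, k i = ∑ i, l i) :
    (∀ z : ℂ, ‖z‖ = 1 →
      (∃ g : Matrix (Fin 3) (Fin 3) ℂ, g * gᴴ = 1 ∧ g.det = 1 ∧
        Matrix.diagonal (fun i => z ^ (k i)) * g *
          (Matrix.diagonal (fun i => z ^ (l i)))⁻¹ = g) → z = 1)
    ↔ (∀ i j : Fin 3, i ≠ j → Int.gcd (k 0 - l i) (k 1 - l j) = 1) := by
  constructor
  · intro H i j hij
    by_contra hd
    obtain ⟨z, hz1, hne, hzd⟩ := esch_exists_root _ hd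
    have hz : z ≠ 0 := by
      rintro rfl
      simp at hz1
    have key : ∀ a : ℤ, ((Int.gcd (k 0 - l i) (k 1 - l j) : ℕ) : ℤ) ∣ a → z ^ a = 1 := by
      rintro a ⟨c, rfl⟩
      rw [_root_.zpow_mul, zpow_natCast, hzd, _root_.one_zpow]
    obtain ⟨σ, rfl, rfl⟩ := esch_exists_perm i j hij
    have hs : ∑ i, l (σ i) = ∑ i, l i := Equiv.sum_comp σ l
    rw [← hs, Fin.sum_univ_three, Fin.sum_univ_three] at hsum
    have d0 := Int.gcd_dvd_left (k 0 - l (σ 0)) (k 1 - l (σ 1))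
    have d1 := Int.gcd_dvd_right (k 0 - l (σ 0)) (k 1 - l (σ 1))
    have hk : ∀ a, z ^ k a = z ^ l (σ a) := by
      intro a
      rw [esch_zpow_eq z hz]
      apply key
      fin_cases a
      · exact d0
      · exact d1
      · have : k 2 - l (σ 2) = -((k 0 - l (σ 0)) + (k 1 - l (σ 1))) := by linarith
        exact this ▸ (dvd_neg.mpr (dvd_add d0 d1))
    apply hne
    have hsq : ((Equiv.Perm.sign σ : ℤ) : ℂ) * ((Equiv.Perm.sign σ : ℤ) : ℂ) = 1 := by
      rcases Int.units_eq_one_or (Equiv.Perm.sign σ) with h | h <;> simp [h]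
    refine H z hz1 ⟨((Equiv.Perm.sign σ : ℤ) : ℂ) • σ.permMatrix ℂ, ?_, ?_, ?_⟩
    · rw [Matrix.conjTranspose_smul, Matrix.conjTranspose_permMatrix, Matrix.smul_mul,
        Matrix.mul_smul, smul_smul, ← Matrix.permMatrix_mul]
      simp [hsq]
    · rw [Matrix.det_smul, Matrix.det_permutation, Fintype.card_fin]
      linear_combination (((Equiv.Perm.sign σ : ℤ) : ℂ) * ((Equiv.Perm.sign σ : ℤ) : ℂ) + 1) * hsq
    · rw [esch_fix_iff z hz]
      intro a b hab
      have : σ a = b := by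
        by_contra h
        apply hab
        simp [Equiv.Perm.permMatrix, PEquiv.toMatrix_apply, h]
      rw [← this, hk]
  · rintro H z hz1 ⟨g, -, hdet, hg⟩
    have hz : z ≠ 0 := by
      rintro rfl
      simp at hz1
    rw [esch_fix_iff z hz] at hg
    have hσ : ∃ σ : Equiv.Perm (Fin 3), ∀ i, g i (σ i) ≠ 0 := by
      by_contra! hc
      rw [← Matrix.det_transpose, Matrix.det_apply, Finset.sum_eq_zero] at hdet
      · exact zero_ne_one hdet
      · intro σ _
        obtain ⟨i, hi⟩ := hc σ
        rw [Finset.prod_eq_zero (Finset.mem_univ i) (by simpa using hi), smul_zero]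
    obtain ⟨σ, hσ⟩ := hσ
    have h0 := (esch_zpow_eq z hz _ _).mp (hg _ _ (hσ 0))
    have h1 := (esch_zpow_eq z hz _ _).mp (hg _ _ (hσ 1))
    have hgcd := H (σ 0) (σ 1) (fun h => by simpa using σ.injective h)
    have hb := Int.gcd_eq_gcd_ab (k 0 - l (σ 0)) (k 1 - l (σ 1))
    rw [hgcd] at hb
    have : z ^ (((1 : ℕ) : ℤ)) = 1 := by
      rw [hb, zpow_add₀ hz, _root_.zpow_mul, _root_.zpow_mul, h0, h1, _root_.one_zpow, _root_.one_zpow, one_mul]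
    simpa using this
end

section
/- Consider the action of the 2-torus T² = {(z,w) ∈ ℂ² : |z| = |w| = 1} on SU(3) given by (z,w) ⋆ g = diag(z, w, zw) · g · diag(1, 1, z²w²)⁻¹. This action is free: if (z,w) ⋆ g = g for some g ∈ SU(3), then z = w = 1. -/
open Matrix Complex

/-- **Freeness of the torus action defining the Eschenburg flag `E⁶`.**  The
action of `T² = {(z,w) : |z| = |w| = 1}` on `SU(3)` given by
`(z,w) ⋆ g = diag(z,w,zw)·g·diag(1,1,z²w²)⁻¹` is free: if `(z,w) ⋆ g = g` for
some `g ∈ SU(3)`, then `z = w = 1`. -/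
theorem eschenburg_flag_action_free
    (z w : ℂ) (hz : ‖z‖ = 1) (hw : ‖w‖ = 1)
    (g : Matrix (Fin 3) (Fin 3) ℂ) (hg : g * gᴴ = 1) (hdet : g.det = 1)
    (hfix : Matrix.diagonal ![z, w, z * w] * g *
      (Matrix.diagonal ![1, 1, z ^ 2 * w ^ 2])⁻¹ = g) :
    z = 1 ∧ w = 1 := by
  have hz0 : z ≠ 0 := by rintro rfl; simp at hz
  have hw0 : w ≠ 0 := by rintro rfl; simp at hw
  have hg2 : gᴴ * g = 1 := mul_eq_one_comm.mp hg
  have hdu : IsUnit (Matrix.diagonal ![1, 1, z ^ 2 * w ^ 2]).det := by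
    rw [Matrix.det_diagonal, isUnit_iff_ne_zero]
    simp [Fin.prod_univ_three, hz0, hw0]
  have h1 : Matrix.diagonal ![z, w, z * w] * g = g * Matrix.diagonal ![1, 1, z ^ 2 * w ^ 2] := by
    conv_rhs => rw [← hfix]
    rw [Matrix.mul_assoc (Matrix.diagonal ![z, w, z * w] * g), Matrix.nonsing_inv_mul _ hdu,
      Matrix.mul_one]
  have h2 : gᴴ * Matrix.diagonal ![z, w, z * w] * g = Matrix.diagonal ![1, 1, z ^ 2 * w ^ 2] := by
    rw [Matrix.mul_assoc, h1, ← Matrix.mul_assoc, hg2, Matrix.one_mul]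
  have htr : z + w + z * w = 1 + 1 + z ^ 2 * w ^ 2 := by
    have h := congrArg Matrix.trace h2
    rw [Matrix.trace_mul_comm, ← Matrix.mul_assoc, hg, Matrix.one_mul] at h
    simpa [Matrix.trace_diagonal, Fin.sum_univ_three] using h
  have hd : (z - 1) * (w - 1) * (z * w - 1) = 0 := by
    have h3 : (Matrix.diagonal ![z, w, z * w] - 1) * g
        = g * (Matrix.diagonal ![1, 1, z ^ 2 * w ^ 2] - 1) := by
      rw [Matrix.sub_mul, Matrix.mul_sub, h1, Matrix.one_mul, Matrix.mul_one]
    have h := congrArg Matrix.det h3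
    rw [Matrix.det_mul, Matrix.det_mul, hdet, ← Matrix.diagonal_one, Matrix.diagonal_sub,
      Matrix.diagonal_sub, Matrix.det_diagonal, Matrix.det_diagonal] at h
    simpa [Fin.prod_univ_three] using h
  rcases mul_eq_zero.mp hd with h | h
  · rcases mul_eq_zero.mp h with h | h
    · have e : z = 1 := sub_eq_zero.mp h
      subst e
      have : (w - 1) ^ 2 = 0 := by linear_combination -htr
      exact ⟨rfl, sub_eq_zero.mp (pow_eq_zero_iff two_ne_zero |>.mp this)⟩
    · have e : w = 1 := sub_eq_zero.mp h
      subst e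
      have : (z - 1) ^ 2 = 0 := by linear_combination -htr
      exact ⟨sub_eq_zero.mp (pow_eq_zero_iff two_ne_zero |>.mp this), rfl⟩
  · have hs : z + w = 2 := by linear_combination htr + (z * w) * h
    have : (z - 1) ^ 2 = 0 := by linear_combination z * hs - h
    have e : z = 1 := sub_eq_zero.mp (pow_eq_zero_iff two_ne_zero |>.mp this)
    exact ⟨e, by linear_combination hs - e⟩
end

section
/- Let U be an n×n complex unitary matrix and let a, h : Fin n → ℝ. Then Re tr(U · diag(a) · U* · diag(h)) lies between the minimum and the maximum, over all permutations σ of {1,…,n}, of ∑ᵢ a_{σ(i)} h_i. Equivalently, for the ad-invariant inner product Q(A,B) = Re tr(AB*) on 𝔲(n) and diagonal skew-Hermitian matrices X = diag(ia₁,…,iaₙ), H = diag(ih₁,…,ihₙ), the value Q(U X U⁻¹, H) always lies in the interval [min_σ ∑ᵢ a_{σ(i)}h_i, max_σ ∑ᵢ a_{σ(i)}h_i]. -/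
open Matrix Complex

/-- **Extremal principle for `Q(Ad(g)X, H)` (Ziller, proof of Prop. 4.6).**
For a unitary `U ∈ U(n)` and real tuples `a, h`, the value
`Re tr(U·diag(ia)·U*·diag(ih)*) = Re tr(U·diag(a)·U*·diag(h))` lies between the
minimum and maximum over all permutations `σ` of `∑ᵢ a_{σ(i)} h_i`. -/
theorem adjoint_orbit_extremal_principle
    (n : ℕ) (U : Matrix (Fin n) (Fin n) ℂ) (hU : U * Uᴴ = 1)
    (a h : Fin n → ℝ) :
    Finset.inf' Finset.univ ⟨1, Finset.mem_univ 1⟩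
        (fun σ : Equiv.Perm (Fin n) => ∑ i, a (σ i) * h i)
      ≤ (Matrix.trace (U * Matrix.diagonal (fun i => (a i : ℂ)) * Uᴴ *
          Matrix.diagonal (fun i => (h i : ℂ)))).re
    ∧ (Matrix.trace (U * Matrix.diagonal (fun i => (a i : ℂ)) * Uᴴ *
          Matrix.diagonal (fun i => (h i : ℂ)))).re
      ≤ Finset.sup' Finset.univ ⟨1, Finset.mem_univ 1⟩
          (fun σ : Equiv.Perm (Fin n) => ∑ i, a (σ i) * h i) := by
  have key : (Matrix.trace (U * Matrix.diagonal (fun i => (a i : ℂ)) * Uᴴ *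
          Matrix.diagonal (fun i => (h i : ℂ)))).re
      = ∑ i, ∑ j, Complex.normSq (U i j) * (a j * h i) := by
    simp only [Matrix.trace, Matrix.diag_apply, Matrix.mul_diagonal, Complex.re_sum]
    refine Finset.sum_congr rfl fun i _ => ?_
    rw [Matrix.mul_apply, Finset.sum_mul, Complex.re_sum]
    refine Finset.sum_congr rfl fun j _ => ?_
    simp only [Matrix.mul_diagonal, Matrix.conjTranspose_apply]
    have : U i j * (a j : ℂ) * star (U i j) * (h i : ℂ)
        = ((Complex.normSq (U i j) * (a j * h i) : ℝ) : ℂ) := by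
      push_cast
      rw [← Complex.mul_conj]
      simp only [Complex.star_def]
      ring
    rw [this, Complex.ofReal_re]
  have hU' : Uᴴ * U = 1 := mul_eq_one_comm.mp hU
  have hM : (Matrix.of fun i j => Complex.normSq (U i j)) ∈ doublyStochastic ℝ (Fin n) := by
    rw [mem_doublyStochastic_iff_sum]
    refine ⟨fun i j => Complex.normSq_nonneg _, fun i => ?_, fun j => ?_⟩
    · have h1 := congrFun (congrFun hU i) i
      simp only [Matrix.mul_apply, Matrix.conjTranspose_apply, Complex.star_def,
        Complex.mul_conj, Matrix.one_apply_eq] at h1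
      simp only [Matrix.of_apply]
      exact_mod_cast h1
    · have h1 := congrFun (congrFun hU' j) j
      simp only [Matrix.mul_apply, Matrix.conjTranspose_apply, Complex.star_def,
        mul_comm _ (U _ _), Complex.mul_conj, Matrix.one_apply_eq] at h1
      simp only [Matrix.of_apply]
      exact_mod_cast h1
  obtain ⟨w, hw0, hw1, hw⟩ := exists_eq_sum_perm_of_mem_doublyStochastic hM
  have key2 : ∑ i, ∑ j, Complex.normSq (U i j) * (a j * h i)
      = ∑ σ : Equiv.Perm (Fin n), w σ * ∑ i, a (σ i) * h i := by
    have e : ∀ i j, Complex.normSq (U i j)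
        = ∑ σ : Equiv.Perm (Fin n), w σ * (if σ i = j then 1 else 0) := by
      intro i j
      have := congrFun (congrFun hw i) j
      rw [Matrix.of_apply] at this
      rw [← this, Matrix.sum_apply]
      refine Finset.sum_congr rfl fun σ _ => ?_
      simp [Equiv.Perm.permMatrix, PEquiv.toMatrix_apply, eq_comm]
    simp_rw [e, Finset.sum_mul, Finset.mul_sum]
    rw [Finset.sum_comm' (t' := Finset.univ) (s' := fun _ => Finset.univ) (by simp)]
    rw [Finset.sum_congr rfl fun j _ => Finset.sum_comm]
    rw [Finset.sum_comm]
    refine Finset.sum_congr rfl fun σ _ => ?_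
    rw [Finset.sum_comm]
    refine Finset.sum_congr rfl fun i _ => ?_
    simp
  have lo : ∀ c : ℝ, (∀ σ : Equiv.Perm (Fin n), c ≤ ∑ i, a (σ i) * h i) →
      c ≤ ∑ σ : Equiv.Perm (Fin n), w σ * ∑ i, a (σ i) * h i := by
    intro c hc
    rw [← one_mul c, ← hw1, Finset.sum_mul]
    exact Finset.sum_le_sum fun σ _ => mul_le_mul_of_nonneg_left (hc σ) (hw0 σ)
  have hi : ∀ c : ℝ, (∀ σ : Equiv.Perm (Fin n), ∑ i, a (σ i) * h i ≤ c) →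
      ∑ σ : Equiv.Perm (Fin n), w σ * ∑ i, a (σ i) * h i ≤ c := by
    intro c hc
    rw [← one_mul c, ← hw1, Finset.sum_mul]
    exact Finset.sum_le_sum fun σ _ => mul_le_mul_of_nonneg_left (hc σ) (hw0 σ)
  rw [key, key2]
  exact ⟨lo _ fun σ => Finset.inf'_le (fun σ : Equiv.Perm (Fin n) => ∑ i, a (σ i) * h i)
      (Finset.mem_univ σ),
    hi _ fun σ => Finset.le_sup' (fun σ : Equiv.Perm (Fin n) => ∑ i, a (σ i) * h i)
      (Finset.mem_univ σ)⟩
end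

section
/- Let k = (k₁,k₂,k₃) and l = (l₁,l₂,l₃) be triples of integers with k₁+k₂+k₃ = l₁+l₂+l₃, and suppose l₃ does not lie in the closed interval [min(k₁,k₂,k₃), max(k₁,k₂,k₃)]. Then for every g ∈ SU(3), Q(g·diag(ik₁,ik₂,ik₃)·g⁻¹, diag(i,i,−2i)) ≠ l₁ + l₂ − 2l₃, where Q(A,B) = Re tr(AB*). -/
open Matrix Complex

/-- **Horizontality estimate for Eschenburg spaces (Ziller, proof of
Prop. 4.6).**  Let `k, l` be integer triples with `∑kᵢ = ∑lᵢ` and suppose `l₃`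
does not lie in `[min kᵢ, max kᵢ]`.  Then for every `g ∈ SU(3)`,
`Q(g·diag(ik₁,ik₂,ik₃)·g⁻¹, diag(i,i,−2i)) ≠ l₁ + l₂ − 2l₃`, where
`Q(A,B) = Re tr(AB*)`. -/
theorem eschenburg_horizontality_estimate
    (k l : Fin 3 → ℤ) (hsum : ∑ i, k i = ∑ i, l i)
    (hl : l 2 < min (min (k 0) (k 1)) (k 2) ∨ max (max (k 0) (k 1)) (k 2) < l 2)
    (g : Matrix (Fin 3) (Fin 3) ℂ) (hg : g * gᴴ = 1) (hdet : g.det = 1) :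
    (Matrix.trace (g * Matrix.diagonal (fun i => (k i : ℂ) * Complex.I) * g⁻¹ *
        (Matrix.diagonal ![Complex.I, Complex.I, -2 * Complex.I])ᴴ)).re
      ≠ ((l 0 + l 1 - 2 * l 2 : ℤ) : ℝ) := by
  rw [Matrix.inv_eq_right_inv hg]
  intro h
  have hg2 : gᴴ * g = 1 := mul_eq_one_comm.mp hg
  have col : ∀ i, normSq (g 0 i) + normSq (g 1 i) + normSq (g 2 i) = 1 := by
    intro i
    have := congrArg Complex.re (congrFun (congrFun hg2 i) i)
    simp [Matrix.mul_apply, Fin.sum_univ_three] at this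
    simp only [normSq_apply]
    linarith
  have row : normSq (g 2 0) + normSq (g 2 1) + normSq (g 2 2) = 1 := by
    have := congrArg Complex.re (congrFun (congrFun hg 2) 2)
    simp [Matrix.mul_apply, Fin.sum_univ_three] at this
    simp only [normSq_apply]
    linarith
  have c0 := col 0
  have c1 := col 1
  have c2 := col 2
  have key : (k 0 : ℝ) * (normSq (g 0 0) + normSq (g 1 0) - 2 * normSq (g 2 0))
      + k 1 * (normSq (g 0 1) + normSq (g 1 1) - 2 * normSq (g 2 1))
      + k 2 * (normSq (g 0 2) + normSq (g 1 2) - 2 * normSq (g 2 2))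
      = l 0 + l 1 - 2 * l 2 := by
    push_cast at h
    rw [← h]
    simp [Matrix.trace, Matrix.mul_apply, Fin.sum_univ_three, Matrix.diagonal_apply, normSq_apply]
    ring
  have hs : (k 0 : ℝ) + k 1 + k 2 = l 0 + l 1 + l 2 := by
    simp only [Fin.sum_univ_three] at hsum
    exact_mod_cast hsum
  have n0 := normSq_nonneg (g 2 0)
  have n1 := normSq_nonneg (g 2 1)
  have n2 := normSq_nonneg (g 2 2)
  have e0 : normSq (g 0 0) + normSq (g 1 0) - 2 * normSq (g 2 0) = 1 - 3 * normSq (g 2 0) := by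
    linarith
  have e1 : normSq (g 0 1) + normSq (g 1 1) - 2 * normSq (g 2 1) = 1 - 3 * normSq (g 2 1) := by
    linarith
  have e2 : normSq (g 0 2) + normSq (g 1 2) - 2 * normSq (g 2 2) = 1 - 3 * normSq (g 2 2) := by
    linarith
  rw [e0, e1, e2] at key
  generalize normSq (g 2 0) = a at *
  generalize normSq (g 2 1) = b at *
  generalize normSq (g 2 2) = c at *
  have key2 : a * ((k 0 : ℝ) - l 2) + b * ((k 1 : ℝ) - l 2) + c * ((k 2 : ℝ) - l 2) = 0 := by
    have hc : c = 1 - a - b := by linarith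
    subst hc
    linarith
  rcases hl with hl | hl
  · simp only [lt_min_iff] at hl
    obtain ⟨⟨h0, h1⟩, h2⟩ := hl
    have h0' : (l 2 : ℝ) + 1 ≤ k 0 := by exact_mod_cast h0
    have h1' : (l 2 : ℝ) + 1 ≤ k 1 := by exact_mod_cast h1
    have h2' : (l 2 : ℝ) + 1 ≤ k 2 := by exact_mod_cast h2
    have m0 := mul_nonneg n0 (sub_nonneg.mpr h0')
    have m1 := mul_nonneg n1 (sub_nonneg.mpr h1')
    have m2 := mul_nonneg n2 (sub_nonneg.mpr h2')
    linarith
  · simp only [max_lt_iff] at hl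
    obtain ⟨⟨h0, h1⟩, h2⟩ := hl
    have h0' : (k 0 : ℝ) + 1 ≤ l 2 := by exact_mod_cast h0
    have h1' : (k 1 : ℝ) + 1 ≤ l 2 := by exact_mod_cast h1
    have h2' : (k 2 : ℝ) + 1 ≤ l 2 := by exact_mod_cast h2
    have m0 := mul_nonneg n0 (sub_nonneg.mpr h0')
    have m1 := mul_nonneg n1 (sub_nonneg.mpr h1')
    have m2 := mul_nonneg n2 (sub_nonneg.mpr h2')
    linarith
end

section
/- Let a, b be unit quaternions and let v be a nonzero purely imaginary quaternion orthogonal to i (with respect to the standard inner product on ℍ ≅ ℝ⁴). If a v a⁻¹ = b v b⁻¹, then a⁻¹b is orthogonal to i; if a v a⁻¹ = −b v b⁻¹, then a⁻¹b is orthogonal to 1 (i.e. has zero real part). Hence if the conjugates ava⁻¹ and bvb⁻¹ are equal up to sign, then ā b ⊥ i or ā b ⊥ 1. -/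
open Quaternion
open scoped RealInnerProductSpace

/-- The quaternion `i`. -/
def quatI : Quaternion ℝ := ⟨0, 1, 0, 0⟩

/-- **Wilking's zero-curvature locus computation for `P_ℝT(ℝP³)`.**  Let `a, b`
be unit quaternions and `v` a nonzero purely imaginary quaternion orthogonal to
`i`.  If `ava⁻¹ = bvb⁻¹` then `āb ⊥ i`, and if `ava⁻¹ = −bvb⁻¹` then `āb ⊥ 1`.
Hence if `ava⁻¹` and `bvb⁻¹` agree up to sign, then `āb ⊥ i` or `āb ⊥ 1`. -/
theorem wilking_zero_curvature_locus
    (a b v : Quaternion ℝ) (ha : ‖a‖ = 1) (hb : ‖b‖ = 1)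
    (hv0 : v ≠ 0) (hvre : v.re = 0) (hvi : ⟪v, quatI⟫ = 0) :
    (a * v * a⁻¹ = b * v * b⁻¹ → ⟪star a * b, quatI⟫ = 0)
    ∧ (a * v * a⁻¹ = -(b * v * b⁻¹) → ⟪star a * b, (1 : Quaternion ℝ)⟫ = 0) := by
  have ha0 : a ≠ 0 := by rintro rfl; simp at ha
  have hb0 : b ≠ 0 := by rintro rfl; simp at hb
  have hinv : a⁻¹ = star a := by
    have h : star a * a = 1 := by
      rw [Quaternion.star_mul_self, Quaternion.normSq_eq_norm_mul_self, ha]; simp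
    exact (eq_inv_of_mul_eq_one_left h).symm
  have hI : v.imI = 0 := by
    rw [Quaternion.inner_def, Quaternion.re_mul, Quaternion.re_star, Quaternion.imI_star,
      Quaternion.imJ_star, Quaternion.imK_star] at hvi
    simpa [quatI] using hvi
  have hJK : v.imJ ≠ 0 ∨ v.imK ≠ 0 := by
    by_contra! h
    exact hv0 (Quaternion.ext _ _ hvre hI h.1 h.2)
  rw [← hinv]
  have key : ∀ w : Quaternion ℝ, a * v * a⁻¹ = b * w * b⁻¹ →
      v * (a⁻¹ * b) = (a⁻¹ * b) * w := by
    intro w h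
    have h2 : a⁻¹ * (a * v * a⁻¹) * b = a⁻¹ * (b * w * b⁻¹) * b := by rw [h]
    simpa [mul_assoc, ha0, hb0] using h2
  generalize a⁻¹ * b = c at key
  constructor
  · intro h
    have h := key v h
    have h3 := congrArg QuaternionAlgebra.imJ h
    have h4 := congrArg QuaternionAlgebra.imK h
    simp only [Quaternion.imJ_mul, Quaternion.imK_mul, hvre, hI] at h3 h4
    have : c.imI = 0 := by
      rcases hJK with hy | hy
      · apply (mul_eq_zero.mp (_ : v.imJ * c.imI = 0)).resolve_left hy
        linarith
      · apply (mul_eq_zero.mp (_ : v.imK * c.imI = 0)).resolve_left hy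
        linarith
    rw [Quaternion.inner_def, Quaternion.re_mul, Quaternion.re_star, Quaternion.imI_star,
      Quaternion.imJ_star, Quaternion.imK_star]
    simp [quatI, this]
  · intro h
    have h := key (-v) (by simpa using h)
    have h3 := congrArg QuaternionAlgebra.imJ h
    have h4 := congrArg QuaternionAlgebra.imK h
    simp only [Quaternion.imJ_mul, Quaternion.imK_mul, Quaternion.re_neg, Quaternion.imI_neg,
      Quaternion.imJ_neg, Quaternion.imK_neg, hvre, hI] at h3 h4
    have : c.re = 0 := by
      rcases hJK with hy | hy
      · apply (mul_eq_zero.mp (_ : v.imJ * c.re = 0)).resolve_left hy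
        linarith
      · apply (mul_eq_zero.mp (_ : v.imK * c.re = 0)).resolve_left hy
        linarith
    simp [Quaternion.inner_def, this]
end

section
/- Let X = (x₁,x₂) and Y = (y₁,y₂) be elements of Im ℍ × Im ℍ that are linearly independent over ℝ and satisfy [x₁,y₁] = 0, [x₂,y₂] = 0, [x₁+x₂, y₁+y₂] = 0, and [x₁−x₂, y₁−y₂] = 0, where [u,v] = uv − vu is the quaternion commutator. Then there exists a nonzero u ∈ Im ℍ such that the real span of X and Y equals the span of (u,0) and (0,u). -/
open Quaternion

/-- Commuting imaginary quaternions are multiples of a common nonzero imaginary quaternion. -/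
lemma exists_common_direction (x y : Quaternion ℝ) (hx : x.re = 0) (hy : y.re = 0)
    (h : x * y - y * x = 0) :
    ∃ (p : Quaternion ℝ) (a b : ℝ), p ≠ 0 ∧ p.re = 0 ∧ x = a • p ∧ y = b • p := by
  by_cases hx0 : x = 0
  · by_cases hy0 : y = 0
    · refine ⟨⟨0, 1, 0, 0⟩, 0, 0, ?_, rfl, hx0.trans (zero_smul ℝ (_ : Quaternion ℝ)).symm,
        hy0.trans (zero_smul ℝ (_ : Quaternion ℝ)).symm⟩
      intro h0
      have := congrArg QuaternionAlgebra.imI h0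
      simp at this
    · exact ⟨y, 0, 1, hy0, hy, by simp [hx0], by simp⟩
  · have e1 := congrArg QuaternionAlgebra.imI h
    have e2 := congrArg QuaternionAlgebra.imJ h
    have e3 := congrArg QuaternionAlgebra.imK h
    simp [hx, hy] at e1 e2 e3
    have key : ∀ t : ℝ, t ≠ 0 → ∀ s : ℝ, t * y.imI = s * x.imI → t * y.imJ = s * x.imJ →
        t * y.imK = s * x.imK → y = (s / t) • x := by
      intro t ht s h1 h2 h3
      ext
      · simp [hx, hy]
      · simp only [Quaternion.imI_smul, smul_eq_mul]; field_simp; linarith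
      · simp only [Quaternion.imJ_smul, smul_eq_mul]; field_simp; linarith
      · simp only [Quaternion.imK_smul, smul_eq_mul]; field_simp; linarith
    by_cases hi : x.imI = 0
    · by_cases hj : x.imJ = 0
      · by_cases hk : x.imK = 0
        · exact absurd (by ext <;> simp [hx, hi, hj, hk]) hx0
        · exact ⟨x, 1, _, hx0, hx, by simp, key _ hk y.imK (by linarith) (by linarith) (by ring)⟩
      · exact ⟨x, 1, _, hx0, hx, by simp, key _ hj y.imJ (by linarith) (by ring) (by linarith)⟩
    · exact ⟨x, 1, _, hx0, hx, by simp, key _ hi y.imI (by ring) (by linarith) (by linarith)⟩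

/-- **Zero-curvature 2-planes on `S³ × S³` with the diagonally scaled metric
(Wilking; Ziller, proof of Theorem 5.1).**  If `X = (x₁,x₂)` and `Y = (y₁,y₂)`
in `Im ℍ × Im ℍ` are linearly independent over `ℝ` and satisfy
`[x₁,y₁] = [x₂,y₂] = [x₁+x₂, y₁+y₂] = [x₁−x₂, y₁−y₂] = 0`, then their real span
equals the span of `(u,0)` and `(0,u)` for some nonzero `u ∈ Im ℍ`. -/
theorem zero_curvature_plane_s3s3
    (x₁ x₂ y₁ y₂ : Quaternion ℝ)
    (hx₁ : x₁.re = 0) (hx₂ : x₂.re = 0) (hy₁ : y₁.re = 0) (hy₂ : y₂.re = 0)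
    (hind : LinearIndependent ℝ
      ![((x₁, x₂) : Quaternion ℝ × Quaternion ℝ), (y₁, y₂)])
    (h₁ : x₁ * y₁ - y₁ * x₁ = 0)
    (h₂ : x₂ * y₂ - y₂ * x₂ = 0)
    (h₃ : (x₁ + x₂) * (y₁ + y₂) - (y₁ + y₂) * (x₁ + x₂) = 0)
    (h₄ : (x₁ - x₂) * (y₁ - y₂) - (y₁ - y₂) * (x₁ - x₂) = 0) :
    ∃ u : Quaternion ℝ, u ≠ 0 ∧ u.re = 0 ∧
      Submodule.span ℝ ({(x₁, x₂), (y₁, y₂)} : Set (Quaternion ℝ × Quaternion ℝ))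
        = Submodule.span ℝ
            ({((u, 0) : Quaternion ℝ × Quaternion ℝ), (0, u)} :
              Set (Quaternion ℝ × Quaternion ℝ)) := by
  obtain ⟨p, a, b, hp, hpr, rfl, rfl⟩ := exists_common_direction _ _ hx₁ hy₁ h₁
  obtain ⟨q, c, d, hq, hqr, rfl, rfl⟩ := exists_common_direction _ _ hx₂ hy₂ h₂
  rw [LinearIndependent.pair_iff] at hind
  have hD : a * d - b * c ≠ 0 := by
    intro hD
    have k1 := hind b (-a) (by
      ext1
      · simp only [Prod.smul_mk, Prod.mk_add_mk, Prod.fst_zero]; module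
      · simp only [Prod.smul_mk, Prod.mk_add_mk, Prod.snd_zero]
        have : b • c • q + -a • d • q = -(a * d - b * c) • q := by module
        rw [this, hD]; simp)
    have k2 := hind d (-c) (by
      ext1
      · simp only [Prod.smul_mk, Prod.mk_add_mk, Prod.fst_zero]
        have : d • a • p + -c • b • p = (a * d - b * c) • p := by module
        rw [this, hD]; simp
      · simp only [Prod.smul_mk, Prod.mk_add_mk, Prod.snd_zero]; module)
    have k3 := hind 1 0 (by
      have ha : a = 0 := by linarith [k1.2]
      have hc : c = 0 := by linarith [k2.2]
      simp [ha, hc])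
    exact one_ne_zero k3.1
  have hpq : p * q - q * p = 0 := by
    have : (a * d - b * c) • (p * q - q * p) = 0 := by
      have e : (a * d - b * c) • (p * q - q * p) =
          ((a • p + c • q) * (b • p + d • q) - (b • p + d • q) * (a • p + c • q)) := by
        simp only [mul_add, add_mul, smul_mul_smul_comm]
        module
      rw [e, h₃]
    exact (smul_eq_zero.mp this).resolve_left hD
  obtain ⟨u, s, t, hu, hur, rfl, rfl⟩ := exists_common_direction _ _ hpr hqr hpq
  have hs : s ≠ 0 := by rintro rfl; simp at hp
  have ht : t ≠ 0 := by rintro rfl; simp at hq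
  refine ⟨u, hu, hur, le_antisymm ?_ ?_⟩
  · rw [Submodule.span_le]
    rintro z (rfl | rfl)
    · exact Submodule.mem_span_pair.mpr ⟨a * s, c * t, by simp [smul_smul]⟩
    · exact Submodule.mem_span_pair.mpr ⟨b * s, d * t, by simp [smul_smul]⟩
  · rw [Submodule.span_le]
    rintro z (rfl | rfl)
    · refine Submodule.mem_span_pair.mpr
        ⟨d / (s * (a * d - b * c)), -c / (s * (a * d - b * c)), ?_⟩
      simp only [Prod.smul_mk, Prod.mk_add_mk, smul_smul, ← add_smul, Prod.mk.injEq]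
      constructor
      · convert one_smul ℝ u using 2
        have e : d / (s * (a * d - b * c)) * (a * s) + -c / (s * (a * d - b * c)) * (b * s)
            = (s * (a * d - b * c)) / (s * (a * d - b * c)) := by ring
        rw [e, div_self (mul_ne_zero hs hD)]
      · convert zero_smul ℝ u using 2
        ring
    · refine Submodule.mem_span_pair.mpr
        ⟨-b / (t * (a * d - b * c)), a / (t * (a * d - b * c)), ?_⟩
      simp only [Prod.smul_mk, Prod.mk_add_mk, smul_smul, ← add_smul, Prod.mk.injEq]
      constructor
      · convert zero_smul ℝ u using 2
        ring
      · convert one_smul ℝ u using 2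
        field_simp
        ring
end

section
/- Let σ = diag(1,−1,−1) ∈ SU(3) and let H = {diag(1, z, z̄) : z ∈ ℂ, |z| = 1} ≤ SU(3). For g ∈ SU(3), the coset gH is fixed by left multiplication by σ (i.e. there exists z with |z| = 1 such that σ·g = g·diag(1,z,z̄)) if and only if g is block diagonal of the form blockdiag(u, B) with u ∈ U(1) and B ∈ U(2) (equivalently g₁₂ = g₁₃ = g₂₁ = g₃₁ = 0). -/
open Matrix Complex

/-- **Fixed point set of `σ = diag(1,−1,−1)` on `W_{0,1} = SU(3)/H`,
`H = {diag(1,z,z̄)}` (Ziller, Section 4).**  For `g ∈ SU(3)`, the coset `gH` is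
fixed by left multiplication by `σ` (i.e. `σg = g·diag(1,z,z̄)` for some unit
`z`) if and only if `g` is block diagonal: `g₁₂ = g₁₃ = g₂₁ = g₃₁ = 0`. -/
theorem fixed_point_set_aloff_wallach_w01
    (g : Matrix (Fin 3) (Fin 3) ℂ) (hg : g * gᴴ = 1) (hdet : g.det = 1) :
    (∃ z : ℂ, ‖z‖ = 1 ∧
        Matrix.diagonal ![1, -1, -1] * g
          = g * Matrix.diagonal ![1, z, (starRingEnd ℂ) z])
    ↔ (g 0 1 = 0 ∧ g 0 2 = 0 ∧ g 1 0 = 0 ∧ g 2 0 = 0) := by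
  constructor
  · rintro ⟨z, -, h⟩
    have e1 := congrFun (congrFun h 1) 0
    have e2 := congrFun (congrFun h 2) 0
    simp only [Matrix.diagonal_mul, Matrix.mul_diagonal] at e1 e2
    simp at e1 e2
    have h1 : g 1 0 = 0 := by linear_combination (-1 / 2) * e1
    have h2 : g 2 0 = 0 := by linear_combination (-1 / 2) * e2
    have hg' : gᴴ * g = 1 := mul_eq_one_comm.mp hg
    have f0 := congrFun (congrFun hg' 0) 0
    have f1 := congrFun (congrFun hg' 0) 1
    have f2 := congrFun (congrFun hg' 0) 2
    simp [Matrix.mul_apply, Fin.sum_univ_three, h1, h2] at f0 f1 f2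
    have h0 : g 0 0 ≠ 0 := by
      intro h0
      simp [h0] at f0
    exact ⟨f1.resolve_left h0, f2.resolve_left h0, h1, h2⟩
  · rintro ⟨h1, h2, h3, h4⟩
    refine ⟨-1, by simp, ?_⟩
    ext i j
    rw [Matrix.diagonal_mul, Matrix.mul_diagonal]
    fin_cases i <;> fin_cases j <;> simp [h1, h2, h3, h4]
end
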